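/- arXiv:2311.17281 — 2 statements merged into one kernel-verified Lean document; each statement's English description precedes it below -/
import Mathlib

section
/- There exist universal constants c₁ > 0, c₂ > 0 and c₃ > 0 such that for all integers n ≥ 1 and 1 ≤ r ≤ n/2: if u₁,…,u_r, v₁,…,v_r ∈ ℝⁿ are independent standard Gaussian random vectors, then with probability at least 1 − exp(−c₃·n) we have c₁·n²·r ≤ ‖Σ_{i=1}^r uᵢvᵢᵀ‖_F² ≤ c₂·n²·r. -/
/-!
Let `U`, `V` be the `r × n` matrices with rows `uᵢ`, `vᵢ`, so that the plant is `UᵀV`. The proof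
factors `‖UᵀV‖_F² = ‖U‖_F² · (‖UᵀV‖_F² / ‖U‖_F²)` and shows that the first factor has order `r n`
and the second has order `n`, each up to probability `2 exp (-2n)`.

The first factor is a chi-square variable with `r n` degrees of freedom. For the second, fix `U`:
row `k` of `UᵀV` is a combination of the Gaussian vectors `vₗ` with coefficients the `k`-th column
of `U`, hence the norm of that column times a standard Gaussian vector (`comb_indep`, `comb_law`).
The ratio is therefore a convex combination of (dependent) chi-square variables with `n` degrees of
freedom, and by convexity of `exp` its exponential moments are at most those of a single such
variable (`quad_mgf`). This makes any control of the operator norm of `U` unnecessary. The Chernoff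
bound (`chi_tails`) then gives both tails of both factors.
-/

open MeasureTheory ProbabilityTheory Matrix
open scoped ENNReal Classical

noncomputable section

/-- Squared Euclidean norm of a finitely-indexed real vector. -/
def sqNorm {ι : Type*} [Fintype ι] (x : ι → ℝ) : ℝ := ∑ i, x i ^ 2

/-- Squared Frobenius norm of a real matrix. -/
def frobSq {m n : Type*} [Fintype m] [Fintype n] (A : Matrix m n ℝ) : ℝ :=
  ∑ i, ∑ j, A i j ^ 2

/-- Spectral (ℓ₂ operator) norm of a real matrix. -/
def specNorm {m n : Type*} [Fintype m] [Fintype n] (A : Matrix m n ℝ) : ℝ :=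
  sSup ((fun x : n → ℝ => Real.sqrt (sqNorm (A.mulVec x))) '' {x | sqNorm x ≤ 1})

/-- `i`-th largest singular value (1-based), characterized via
`σ_i(A) = min {‖A − X‖ : rank X ≤ i − 1}`. -/
def singVal {m n : Type*} [Fintype m] [Fintype n] (A : Matrix m n ℝ) (i : ℕ) : ℝ :=
  sInf {c | ∃ X : Matrix m n ℝ, X.rank ≤ i - 1 ∧ c = specNorm (A - X)}

/-- Flattening of an `n × n` matrix into a vector in `ℝ^{n²}`. -/
def vec (n : ℕ) (A : Matrix (Fin n) (Fin n) ℝ) : Fin (n * n) → ℝ :=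
  fun i => A (finProdFinEquiv.symm i).1 (finProdFinEquiv.symm i).2

/-- `u ⊗ v = vec (u vᵀ) ∈ ℝ^{n²}`. -/
def tensor {n : ℕ} (u v : Fin n → ℝ) : Fin (n * n) → ℝ :=
  vec n (Matrix.of fun i j => u i * v j)

/-- Standard Gaussian measure on `ι → ℝ`. -/
def stdGaussian (ι : Type*) [Fintype ι] : Measure (ι → ℝ) :=
  Measure.pi fun _ => gaussianReal 0 1

/-- Standard Gaussian measure on `n × n` matrices (as `Fin n → Fin n → ℝ`). -/
def stdGaussianMat (n : ℕ) : Measure (Fin n → Fin n → ℝ) :=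
  Measure.pi fun _ => stdGaussian (Fin n)

/-- Query maps of a deterministic `t`-round adaptive algorithm making `k` linear
measurements per round on inputs in `ℝ^N`. -/
def QueryMaps (N k t : ℕ) : Type :=
  (j : Fin t) → (Fin (j : ℕ) → (Fin k → ℝ)) → Matrix (Fin k) (Fin N) ℝ

namespace QueryMaps

variable {N k t : ℕ}

/-- Restriction of a round-`j` history to the first `i` rounds. -/
def prefixHist {j : Fin t} (h : Fin (j : ℕ) → Fin k → ℝ) {i : Fin t}
    (hij : (i : ℕ) < (j : ℕ)) : Fin (i : ℕ) → Fin k → ℝ :=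
  fun l => h ⟨l.1, l.isLt.trans hij⟩

/-- Validity of query maps: measurability, orthonormal rows within each round, and
orthogonality across rounds along consistent histories. -/
def Valid (Q : QueryMaps N k t) : Prop :=
  (∀ (j : Fin t) (i : Fin k) (l : Fin N), Measurable fun h => Q j h i l) ∧
  (∀ (j : Fin t) (h : Fin (j : ℕ) → Fin k → ℝ), Q j h * (Q j h)ᵀ = 1) ∧
  (∀ (j i : Fin t) (hij : (i : ℕ) < (j : ℕ)) (h : Fin (j : ℕ) → Fin k → ℝ),
      Q j h * (Q i (prefixHist h hij))ᵀ = 0)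

/-- Responses of the algorithm under exact linear measurements of `a`. -/
def resp (Q : QueryMaps N k t) (a : Fin N → ℝ) (j : Fin t) : Fin k → ℝ :=
  (Q j fun i => resp Q a ⟨i.1, i.isLt.trans j.isLt⟩).mulVec a
termination_by (j : ℕ)
decreasing_by exact i.isLt

/-- Responses of the algorithm under noisy linear measurements of `a`, with fresh
per-round noise `g`. -/
def nresp (Q : QueryMaps N k t) (a : Fin N → ℝ) (g : Fin t → Fin k → ℝ) (j : Fin t) :
    Fin k → ℝ :=
  ((Q j fun i => nresp Q a g ⟨i.1, i.isLt.trans j.isLt⟩).mulVec a) + g j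
termination_by (j : ℕ)
decreasing_by exact i.isLt

/-- The `tk × N` matrix stacking all the query matrices realized along the run of the
algorithm on input `a` (exact measurements). -/
def runMat (Q : QueryMaps N k t) (a : Fin N → ℝ) : Matrix (Fin t × Fin k) (Fin N) ℝ :=
  Matrix.of fun p l =>
    Q p.1 (fun i => resp Q a ⟨i.1, i.isLt.trans p.1.isLt⟩) p.2 l

end QueryMaps

/-- Kullback–Leibler divergence, valued in `[0, ∞]`, defined with the natural
logarithm. -/
def klDiv {Ω : Type*} [MeasurableSpace Ω] (P Q : Measure Ω) : ℝ≥0∞ :=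
  if P ≪ Q ∧ Integrable (fun x => Real.log ((P.rnDeriv Q x).toReal)) P then
    ENNReal.ofReal (∫ x, Real.log ((P.rnDeriv Q x).toReal) ∂P)
  else ⊤


/-- The rank-`r` plant `Σ_{i=1}^r uᵢ vᵢᵀ` built from the rows of `U` and `V`. -/
def plant {n r : ℕ} (U V : Fin r → Fin n → ℝ) : Matrix (Fin n) (Fin n) ℝ :=
  Matrix.of fun i j => ∑ l, U l i * V l j

/-- Schatten-`p` norm (real `p`), via the singular values. -/
def schattenNorm {n : ℕ} (p : ℝ) (A : Matrix (Fin n) (Fin n) ℝ) : ℝ :=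
  (∑ i ∈ Finset.range n, singVal A (i + 1) ^ p) ^ (1 / p)

/-- Ky-Fan `p` norm: sum of the `p` largest singular values. -/
def kyFanNorm {n : ℕ} (p : ℕ) (A : Matrix (Fin n) (Fin n) ℝ) : ℝ :=
  ∑ i ∈ Finset.range p, singVal A (i + 1)

/-! ### Moment generating functions of chi-square variables -/

lemma lintegral_exp_sq_gaussian {s : ℝ} (hs : s < 1 / 2) :
    ∫⁻ x, ENNReal.ofReal (Real.exp (s * x ^ 2)) ∂(gaussianReal 0 1)
      = ENNReal.ofReal (√(1 - 2 * s))⁻¹ := by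
  rw [gaussianReal_of_var_ne_zero 0 one_ne_zero,
    lintegral_withDensity_eq_lintegral_mul _ (measurable_gaussianPDF 0 1) (by fun_prop)]
  have hb : 0 < 1 / 2 - s := by linarith
  have h1 : ∀ x : ℝ, (gaussianPDF 0 1 * fun x => ENNReal.ofReal (Real.exp (s * x ^ 2))) x
      = ENNReal.ofReal ((√(2 * Real.pi))⁻¹ * Real.exp (-(1 / 2 - s) * x ^ 2)) := by
    intro x
    simp only [Pi.mul_apply, gaussianPDF]
    rw [← ENNReal.ofReal_mul (gaussianPDFReal_nonneg 0 1 x)]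
    congr 1
    simp only [gaussianPDFReal, NNReal.coe_one, mul_one, sub_zero, mul_assoc, ← Real.exp_add]
    congr 2
    ring
  simp_rw [h1]
  rw [← ofReal_integral_eq_lintegral_ofReal
      ((integrable_exp_neg_mul_sq hb).const_mul _) (ae_of_all _ fun x => by positivity),
    integral_const_mul, integral_gaussian]
  congr 1
  rw [← Real.sqrt_inv, ← Real.sqrt_mul (by positivity), ← Real.sqrt_inv]
  congr 1
  have : 1 - 2 * s ≠ 0 := by linarith
  have := Real.pi_ne_zero
  have := hb.ne'
  field_simp

lemma lintegral_exp_sum_sq {Ω ι : Type*} [MeasurableSpace Ω] [Fintype ι] {P : Measure Ω}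
    {Y : ι → Ω → ℝ} (hm : ∀ i, Measurable (Y i)) (hind : iIndepFun Y P)
    (hlaw : ∀ i, P.map (Y i) = gaussianReal 0 1) {s : ℝ} (hs : s < 1 / 2) :
    ∫⁻ ω, ENNReal.ofReal (Real.exp (s * ∑ i, Y i ω ^ 2)) ∂P
      = ENNReal.ofReal ((√(1 - 2 * s))⁻¹ ^ Fintype.card ι) := by
  have h1 : ∀ ω, ENNReal.ofReal (Real.exp (s * ∑ i, Y i ω ^ 2))
      = ∏ i, ENNReal.ofReal (Real.exp (s * Y i ω ^ 2)) := by
    intro ω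
    rw [Finset.mul_sum, Real.exp_sum, ENNReal.ofReal_prod_of_nonneg fun i _ => by positivity]
  have h2 : iIndepFun (fun i ω => ENNReal.ofReal (Real.exp (s * Y i ω ^ 2))) P :=
    hind.comp (fun _ x => ENNReal.ofReal (Real.exp (s * x ^ 2))) (fun _ => by fun_prop)
  simp_rw [h1]
  rw [lintegral_prod_eq_prod_lintegral_of_indepFun Finset.univ _ h2
    (fun i => by have := hm i; fun_prop)]
  have h3 : ∀ i, ∫⁻ ω, ENNReal.ofReal (Real.exp (s * Y i ω ^ 2)) ∂P
      = ENNReal.ofReal (√(1 - 2 * s))⁻¹ := by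
    intro i
    rw [← lintegral_exp_sq_gaussian hs, ← hlaw i, lintegral_map (by fun_prop) (hm i)]
  simp only [h3, Finset.prod_const, Finset.card_univ]
  rw [ENNReal.ofReal_pow (by positivity)]

/-! ### Gaussian families and their linear combinations -/

instance {ι : Type*} [Fintype ι] : IsProbabilityMeasure (stdGaussian ι) := by
  unfold _root_.stdGaussian; infer_instance

/-- The joint law of `r` independent standard Gaussian vectors in `ℝⁿ`; the vectors are the rows
of the `r × n` array. -/
abbrev gaussFam (r n : ℕ) : Measure (Fin r → Fin n → ℝ) :=
  Measure.pi fun _ : Fin r => stdGaussian (Fin n)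

lemma gaussFam_eval (r n : ℕ) (l : Fin r) (j : Fin n) :
    (gaussFam r n).map (fun V => V l j) = gaussianReal 0 1 := by
  have h1 := (measurePreserving_eval (fun _ : Fin r => stdGaussian (Fin n)) l)
  have h2 : MeasurePreserving (Function.eval j) (stdGaussian (Fin n)) (gaussianReal 0 1) :=
    measurePreserving_eval (fun _ : Fin n => gaussianReal 0 1) j
  exact (h2.comp h1).map_eq

lemma gaussFam_indep (r n : ℕ) :
    iIndepFun (fun (p : Fin r × Fin n) (V : Fin r → Fin n → ℝ) => V p.1 p.2)
      (gaussFam r n) := by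
  have h := iIndepFun_uncurry_infinitePi' (X := fun (_ : Fin r) (_ : Fin n) (x : ℝ) => x)
    (fun _ _ => gaussianReal 0 1) (fun _ _ => measurable_id)
  simp only [Measure.infinitePi_eq_pi] at h
  exact h

lemma gaussFam_map_transpose (r n : ℕ) :
    (gaussFam r n).map (fun V (j : Fin n) (l : Fin r) => V l j) = gaussFam n r := by
  -- Both sides become the i.i.d. law on `Fin n × Fin r → ℝ` after uncurrying.
  have h1 := (iIndepFun_iff_map_fun_eq_pi_map fun p => Measurable.aemeasurable (by fun_prop)).1
    ((gaussFam_indep r n).precomp (g := Prod.swap) Prod.swap_injective)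
  have h2 := (iIndepFun_iff_map_fun_eq_pi_map fun p => Measurable.aemeasurable (by fun_prop)).1 (gaussFam_indep n r)
  simp only [gaussFam_eval] at h1 h2
  have h3 := congrArg (Measure.map fun (w : Fin n × Fin r → ℝ) j l => w (j, l)) (h1.trans h2.symm)
  rw [Measure.map_map (by fun_prop) (by fun_prop), Measure.map_map (by fun_prop) (by fun_prop)] at h3
  refine Eq.trans h3 ?_
  exact Measure.map_id

lemma comb_indep {r n : ℕ} (a : Fin r → ℝ) :
    iIndepFun (fun (j : Fin n) (V : Fin r → Fin n → ℝ) => ∑ l, a l * V l j)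
      (gaussFam r n) := by
  have hcol : iIndepFun (fun (j : Fin n) (V : Fin r → Fin n → ℝ) (l : Fin r) => V l j)
      (gaussFam r n) := by
    rw [iIndepFun_iff_map_fun_eq_pi_map (fun j => Measurable.aemeasurable (by fun_prop)),
      gaussFam_map_transpose]
    have hj : ∀ j : Fin n, (gaussFam r n).map (fun V (l : Fin r) => V l j)
        = _root_.stdGaussian (Fin r) := by
      intro j
      have h := (measurePreserving_eval (fun _ : Fin n => _root_.stdGaussian (Fin r)) j).map_eq
      change Measure.map _ (gaussFam n r) = _ at h
      rw [← gaussFam_map_transpose, Measure.map_map (by fun_prop) (by fun_prop)] at h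
      exact h
    simp only [hj]
  exact hcol.comp (fun _ w => ∑ l, a l * w l) (fun _ => by fun_prop)

/-- A unit combination `∑ₗ aₗ Vₗ` of the Gaussian rows has standard normal coordinates; with
`comb_indep` it is again a standard Gaussian vector. -/
lemma comb_law {r n : ℕ} (a : Fin r → ℝ) (ha : ∑ l, a l ^ 2 = 1) (j : Fin n) :
    (gaussFam r n).map (fun V => ∑ l, a l * V l j) = gaussianReal 0 1 := by
  have hind : iIndepFun (fun (l : Fin r) (V : Fin r → Fin n → ℝ) => a l * V l j)
      (gaussFam r n) :=
    iIndepFun_pi (X := fun l (v : Fin n → ℝ) => a l * v j)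
      (μ := fun _ : Fin r => stdGaussian (Fin n)) (fun l => Measurable.aemeasurable (by fun_prop))
  have hsum : (fun V : Fin r → Fin n → ℝ => ∑ l, a l * V l j)
      = ∑ l, fun V : Fin r → Fin n → ℝ => a l * V l j := by
    ext V; simp
  have : IsProbabilityMeasure ((gaussFam r n).map (fun V => ∑ l, a l * V l j)) :=
    Measure.isProbabilityMeasure_map (Measurable.aemeasurable (by fun_prop))
  apply Measure.ext_of_charFun
  rw [hsum, iIndepFun.charFun_map_sum_eq_prod (fun l => Measurable.aemeasurable (by fun_prop)) hind]
  ext t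
  have hl : ∀ l, (gaussFam r n).map (fun V => a l * V l j)
      = gaussianReal (a l * 0) (.mk (a l ^ 2) (sq_nonneg _) * 1) := by
    intro l
    rw [← gaussianReal_map_const_mul, ← gaussFam_eval r n l j,
      Measure.map_map (by fun_prop) (by fun_prop)]
    rfl
  simp only [Finset.prod_apply, hl, charFun_gaussianReal, ← Complex.exp_sum]
  congr 1
  have hc : ∑ l, (a l : ℂ) ^ 2 = 1 := by exact_mod_cast congrArg (fun x : ℝ => (x : ℂ)) ha
  simp
  rw [← Finset.sum_div, ← Finset.sum_mul, hc, one_mul]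

/-! ### Chernoff bounds -/

/-- For fixed `U ≠ 0`, the ratio `‖UᵀV‖_F² / ‖U‖_F²` has exponential moments bounded by those of a
chi-square variable with `n` degrees of freedom. Row `k` of `UᵀV` is `N k` times a standard Gaussian
vector, where `N k` is the norm of column `k` of `U`, so the ratio is a convex combination of
chi-square variables with weights `N k ^ 2 / ‖U‖_F²`, and Jensen's inequality applies whatever their
dependence. -/
lemma quad_mgf {r n : ℕ} (U : Fin r → Fin n → ℝ) (hU : 0 < frobSq U)
    {s : ℝ} (hs : s < 1 / 2) :
    ∫⁻ V, ENNReal.ofReal (Real.exp (s * (frobSq (plant U V) / frobSq U))) ∂(gaussFam r n)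
      ≤ ENNReal.ofReal ((√(1 - 2 * s))⁻¹ ^ n) := by
  set N : Fin n → ℝ := fun k => √(∑ l, U l k ^ 2) with hN
  have hNsq : ∀ k, N k ^ 2 = ∑ l, U l k ^ 2 := fun k => Real.sq_sqrt (by positivity)
  set p : Fin n → ℝ := fun k => N k ^ 2 / frobSq U with hp
  have hp0 : ∀ k, 0 ≤ p k := fun k => by positivity
  have hp1 : ∑ k, p k = 1 := by
    simp only [hp, hNsq]
    rw [← Finset.sum_div, Finset.sum_comm]
    exact div_self hU.ne'
  set g : Fin n → Fin n → (Fin r → Fin n → ℝ) → ℝ :=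
    fun k j V => ∑ l, (U l k / N k) * V l j with hg
  have hgm : ∀ k j, Measurable (g k j) := fun k j => by simp only [hg]; fun_prop
  have hA : ∀ k j V, plant U V k j = N k * g k j V := by
    intro k j V
    simp only [plant, Matrix.of_apply, hg, Finset.mul_sum]
    refine Finset.sum_congr rfl fun l _ => ?_
    -- A zero column of `U` gives `g k j = 0` through division by zero, and both sides vanish.
    by_cases h0 : N k = 0
    · have h := hNsq k
      rw [h0, zero_pow two_ne_zero, eq_comm,
        Finset.sum_eq_zero_iff_of_nonneg fun i _ => by positivity] at h
      have := h l (Finset.mem_univ l)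
      simp [h0, pow_eq_zero_iff two_ne_zero |>.1 this]
    · field_simp
  have hpt : ∀ V, ENNReal.ofReal (Real.exp (s * (frobSq (plant U V) / frobSq U)))
      ≤ ∑ k, ENNReal.ofReal (p k) * ENNReal.ofReal (Real.exp (s * ∑ j, g k j V ^ 2)) := by
    intro V
    have he : s * (frobSq (plant U V) / frobSq U) = ∑ k, p k • (s * ∑ j, g k j V ^ 2) := by
      rw [frobSq]
      simp only [hA, mul_pow, hp, smul_eq_mul, ← Finset.mul_sum, Finset.sum_div]
      rw [Finset.mul_sum]
      exact Finset.sum_congr rfl fun k _ => by ring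
    have hj := convexOn_exp.map_sum_le (t := Finset.univ) (w := p)
      (p := fun k => s * ∑ j, g k j V ^ 2) (fun k _ => hp0 k) hp1 (fun _ _ => Set.mem_univ _)
    rw [he]
    refine (ENNReal.ofReal_le_ofReal hj).trans_eq ?_
    rw [ENNReal.ofReal_sum_of_nonneg
      fun k _ => by simp only [smul_eq_mul]; exact mul_nonneg (hp0 k) (Real.exp_pos _).le]
    exact Finset.sum_congr rfl fun k _ => by rw [smul_eq_mul, ENNReal.ofReal_mul (hp0 k)]
  refine (lintegral_mono hpt).trans ?_
  rw [lintegral_finsetSum _ fun k _ => by fun_prop]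
  have hk : ∀ k, ∫⁻ V, ENNReal.ofReal (p k) *
        ENNReal.ofReal (Real.exp (s * ∑ j, g k j V ^ 2)) ∂(gaussFam r n)
      = ENNReal.ofReal (p k) * ENNReal.ofReal ((√(1 - 2 * s))⁻¹ ^ n) := by
    intro k
    by_cases h0 : N k = 0
    · simp [hp, h0]
    have ha : ∑ l, (U l k / N k) ^ 2 = 1 := by
      simp only [div_pow]
      rw [← Finset.sum_div, ← hNsq, div_self (pow_ne_zero 2 h0)]
    rw [lintegral_const_mul _ (by fun_prop), lintegral_exp_sum_sq (hgm k)
      (comb_indep fun l => U l k / N k) (comb_law _ ha) hs, Fintype.card_fin]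
  simp_rw [hk]
  rw [← Finset.sum_mul, ← ENNReal.ofReal_sum_of_nonneg fun k _ => hp0 k, hp1]
  simp

/-- The Chernoff bound for both tails: the event is `a ≤ X` for `s > 0` and `X ≤ a` for `s < 0`. -/
lemma markov_exp {Ω : Type*} [MeasurableSpace Ω] {P : Measure Ω} {X : Ω → ℝ}
    (hX : Measurable X) {s a b d : ℝ}
    (h : ∫⁻ ω, ENNReal.ofReal (Real.exp (s * X ω)) ∂P ≤ ENNReal.ofReal b)
    (hd : b ≤ Real.exp (s * a) * d) :
    P {ω | s * a ≤ s * X ω} ≤ ENNReal.ofReal d := by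
  have hM := (mul_meas_ge_le_lintegral (μ := P)
    (f := fun ω => ENNReal.ofReal (Real.exp (s * X ω))) (by fun_prop)
    (ENNReal.ofReal (Real.exp (s * a)))).trans (h.trans (ENNReal.ofReal_le_ofReal hd))
  rw [ENNReal.ofReal_mul (Real.exp_pos _).le] at hM
  have hpos : ENNReal.ofReal (Real.exp (s * a)) ≠ 0 := by
    simpa using Real.exp_pos _
  have := (ENNReal.mul_le_mul_iff_right hpos ENNReal.ofReal_ne_top).1 hM
  refine le_trans (measure_mono fun ω hω => ?_) this
  exact ENNReal.ofReal_le_ofReal (Real.exp_le_exp.2 hω)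

/-- If the exponential moments of `X` are at most those of a chi-square variable with `N` degrees of
freedom, then `N / 1000 < X < 12 N` outside two events of probability at most `exp (-2N)` each. -/
lemma chi_tails {Ω : Type*} [MeasurableSpace Ω] {P : Measure Ω} {X : Ω → ℝ}
    (hX : Measurable X) {N : ℕ}
    (h : ∀ s : ℝ, s < 1 / 2 → ∫⁻ ω, ENNReal.ofReal (Real.exp (s * X ω)) ∂P
      ≤ ENNReal.ofReal ((√(1 - 2 * s))⁻¹ ^ N)) :
    P {ω | X ω ≤ N / 1000} ≤ ENNReal.ofReal (Real.exp (-(2 * N))) ∧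
      P {ω | 12 * N ≤ X ω} ≤ ENNReal.ofReal (Real.exp (-(2 * N))) := by
  have he : Real.exp 1 < 3 := Real.exp_one_lt_d9.trans (by norm_num)
  constructor
  -- Lower tail with `s = -1000`: the claim is `√2001⁻¹ ≤ exp (-3)`, raised to the power `N`.
  · have := markov_exp hX (a := N / 1000) (d := Real.exp (-(2 * N))) (h (-1000) (by norm_num)) ?_
    · refine (measure_mono fun ω hω => ?_).trans this
      simp only [Set.mem_ofPred_eq] at hω ⊢
      linarith
    · rw [← Real.exp_add, show (-1000 * (N / 1000 : ℝ) + -(2 * N)) = N * (-3) by ring,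
        Real.exp_nat_mul]
      refine pow_le_pow_left₀ (by positivity) ?_ N
      rw [Real.exp_neg]
      refine inv_anti₀ (Real.exp_pos _) (Real.le_sqrt_of_sq_le ?_)
      rw [← Real.exp_nat_mul, show ((2 : ℕ) : ℝ) * 3 = (6 : ℕ) * 1 by norm_num, Real.exp_nat_mul]
      exact (pow_le_pow_left₀ (Real.exp_pos _).le he.le 6).trans (by norm_num)
  -- Upper tail with `s = 1/4`: the claim is `√2 ≤ exp 1`, raised to the power `N`.
  · have := markov_exp hX (a := 12 * N) (d := Real.exp (-(2 * N))) (h (1 / 4) (by norm_num)) ?_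
    · refine (measure_mono fun ω hω => ?_).trans this
      simp only [Set.mem_ofPred_eq] at hω ⊢
      linarith
    · rw [← Real.exp_add, show (1 / 4 * (12 * N : ℝ) + -(2 * N)) = N * 1 by ring,
        Real.exp_nat_mul]
      refine pow_le_pow_left₀ (by positivity) ?_ N
      have h2 : (2 : ℝ) ≤ Real.exp 1 := by linarith [Real.add_one_le_exp (1 : ℝ)]
      refine le_trans (inv_le_of_inv_le₀ (by norm_num) (Real.le_sqrt_of_sq_le ?_)) h2
      norm_num

lemma frob_tails (r n : ℕ) :
    gaussFam r n {U | frobSq U ≤ ((r * n : ℕ) : ℝ) / 1000}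
        ≤ ENNReal.ofReal (Real.exp (-(2 * (r * n : ℕ)))) ∧
      gaussFam r n {U | 12 * ((r * n : ℕ) : ℝ) ≤ frobSq U}
        ≤ ENNReal.ofReal (Real.exp (-(2 * (r * n : ℕ)))) := by
  refine chi_tails (X := fun U : Fin r → Fin n → ℝ => frobSq U)
    (by unfold frobSq; fun_prop) fun s hs => ?_
  have := lintegral_exp_sum_sq (fun p => by fun_prop) (gaussFam_indep r n)
    (fun p => gaussFam_eval r n p.1 p.2) hs
  simp only [Fintype.sum_prod_type, Fintype.card_prod, Fintype.card_fin] at this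
  exact this.le

/-- Tails of `‖UᵀV‖_F²` for fixed `U`. The inequalities are strict so that both events are empty when
`U = 0`. -/
lemma quad_tails {r n : ℕ} (U : Fin r → Fin n → ℝ) :
    gaussFam r n {V | frobSq (plant U V) < n / 1000 * frobSq U}
        ≤ ENNReal.ofReal (Real.exp (-(2 * n))) ∧
      gaussFam r n {V | 12 * n * frobSq U < frobSq (plant U V)}
        ≤ ENNReal.ofReal (Real.exp (-(2 * n))) := by
  have h0 : 0 ≤ frobSq U := by unfold frobSq; positivity
  rcases h0.eq_or_lt with h0 | h0
  · have hz : ∀ l k, U l k = 0 := by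
      intro l k
      have h : ∑ l, ∑ k, U l k ^ 2 = 0 := h0.symm
      rw [Finset.sum_eq_zero_iff_of_nonneg fun i _ => by positivity] at h
      have h := h l (Finset.mem_univ l)
      rw [Finset.sum_eq_zero_iff_of_nonneg fun i _ => by positivity] at h
      simpa using h k (Finset.mem_univ k)
    have hz' : ∀ V : Fin r → Fin n → ℝ, frobSq (plant U V) = 0 := by
      intro V; simp [frobSq, plant, hz]
    simp [hz', ← h0]
  · have h := chi_tails (X := fun V : Fin r → Fin n → ℝ => frobSq (plant U V) / frobSq U)
      (by unfold frobSq plant; simp only [Matrix.of_apply]; fun_prop)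
      (fun s hs => quad_mgf U h0 hs)
    refine ⟨(measure_mono fun V hV => ?_).trans h.1, (measure_mono fun V hV => ?_).trans h.2⟩
    · simp only [Set.mem_ofPred_eq] at hV ⊢
      rw [div_le_iff₀ h0]; exact hV.le
    · simp only [Set.mem_ofPred_eq] at hV ⊢
      rw [le_div_iff₀ h0]; exact hV.le

lemma prod_le_of_section {α β : Type*} [MeasurableSpace α] [MeasurableSpace β]
    {P : Measure α} {Q : Measure β} [IsProbabilityMeasure P] [IsProbabilityMeasure Q]
    {S : Set (α × β)} (hS : MeasurableSet S) {e : ℝ≥0∞}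
    (h : ∀ x, Q (Prod.mk x ⁻¹' S) ≤ e) : P.prod Q S ≤ e := by
  rw [Measure.prod_apply hS]
  exact (lintegral_mono h).trans (by simp)

/-- Frobenius norm concentration for the rank-`r` Gaussian plant. -/
theorem plant_frobenius_concentration :
    ∃ c₁ c₂ c₃ : ℝ, 0 < c₁ ∧ 0 < c₂ ∧ 0 < c₃ ∧
      ∀ (n r : ℕ), 1 ≤ n → 1 ≤ r → 2 * r ≤ n →
      1 - ENNReal.ofReal (Real.exp (-(c₃ * n))) ≤
        ((Measure.pi fun _ : Fin r => stdGaussian (Fin n)).prod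
            (Measure.pi fun _ : Fin r => stdGaussian (Fin n)))
          {p | c₁ * (n : ℝ) ^ 2 * r ≤ frobSq (plant p.1 p.2) ∧
               frobSq (plant p.1 p.2) ≤ c₂ * (n : ℝ) ^ 2 * r} := by
  refine ⟨1 / 1000 ^ 2, 12 ^ 2, 1, by norm_num, by norm_num, by norm_num, ?_⟩
  intro n r hn hr hrn
  change _ ≤ ((gaussFam r n).prod (gaussFam r n)) _
  set P := (gaussFam r n).prod (gaussFam r n) with hP
  set e := ENNReal.ofReal (Real.exp (-(2 * n))) with he
  have hmA : Measurable fun p : (Fin r → Fin n → ℝ) × (Fin r → Fin n → ℝ) =>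
      frobSq (plant p.1 p.2) := by
    unfold frobSq plant; simp only [Matrix.of_apply]; fun_prop
  have hmS : Measurable fun U : Fin r → Fin n → ℝ => frobSq U := by
    unfold frobSq; fun_prop
  have hmS' : Measurable fun p : (Fin r → Fin n → ℝ) × (Fin r → Fin n → ℝ) =>
      frobSq p.1 := hmS.comp measurable_fst
  set B₁ := {p : (Fin r → Fin n → ℝ) × (Fin r → Fin n → ℝ) |
    frobSq p.1 ≤ ((r * n : ℕ) : ℝ) / 1000} with hB₁
  set B₂ := {p : (Fin r → Fin n → ℝ) × (Fin r → Fin n → ℝ) |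
    12 * ((r * n : ℕ) : ℝ) ≤ frobSq p.1} with hB₂
  set B₃ := {p : (Fin r → Fin n → ℝ) × (Fin r → Fin n → ℝ) |
    frobSq (plant p.1 p.2) < n / 1000 * frobSq p.1} with hB₃
  set B₄ := {p : (Fin r → Fin n → ℝ) × (Fin r → Fin n → ℝ) |
    12 * n * frobSq p.1 < frobSq (plant p.1 p.2)} with hB₄
  -- `B₁, B₂`: `‖U‖_F²` is not of order `r n`. `B₃, B₄`: `‖UᵀV‖_F² / ‖U‖_F²` is not of order `n`.
  have hrne : ENNReal.ofReal (Real.exp (-(2 * (r * n : ℕ)))) ≤ e := by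
    refine ENNReal.ofReal_le_ofReal (Real.exp_le_exp.2 ?_)
    have : (n : ℝ) ≤ (r * n : ℕ) := by exact_mod_cast Nat.le_mul_of_pos_left n hr
    linarith
  have hfst : MeasurePreserving Prod.fst P (gaussFam r n) := measurePreserving_fst
  have h₁ : P B₁ ≤ e := by
    refine le_trans (le_of_eq ?_) ((frob_tails r n).1.trans hrne)
    exact hfst.measure_preimage (measurableSet_le hmS measurable_const).nullMeasurableSet
  have h₂ : P B₂ ≤ e := by
    refine le_trans (le_of_eq ?_) ((frob_tails r n).2.trans hrne)
    exact hfst.measure_preimage (measurableSet_le measurable_const hmS).nullMeasurableSet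
  have h₃ : P B₃ ≤ e :=
    prod_le_of_section (measurableSet_lt hmA (hmS'.const_mul _)) fun U => (quad_tails U).1
  have h₄ : P B₄ ≤ e :=
    prod_le_of_section (measurableSet_lt (hmS'.const_mul _) hmA) fun U => (quad_tails U).2
  have hn2 : (2 : ℝ) ≤ n := by exact_mod_cast (by omega : 2 ≤ n)
  -- `n ≥ 2` absorbs the factor `4` of the union bound: `4 exp (-2n) ≤ exp (-n)`.
  have h4e : e + e + e + e ≤ ENNReal.ofReal (Real.exp (-(1 * n))) := by
    rw [he, ← ENNReal.ofReal_add, ← ENNReal.ofReal_add, ← ENNReal.ofReal_add] <;> try positivity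
    refine ENNReal.ofReal_le_ofReal ?_
    have h2 : (2 : ℝ) ≤ Real.exp 1 := by linarith [Real.add_one_le_exp (1 : ℝ)]
    have h4 : (4 : ℝ) ≤ Real.exp n := by
      have : Real.exp (1 + 1) ≤ Real.exp n := Real.exp_le_exp.2 (by linarith)
      rw [Real.exp_add] at this
      nlinarith
    have hsplit : Real.exp (-(1 * n : ℝ)) = Real.exp n * Real.exp (-(2 * n)) := by
      rw [← Real.exp_add]; ring_nf
    rw [hsplit]
    nlinarith [Real.exp_pos (-(2 * n : ℝ))]
  set G := {p : (Fin r → Fin n → ℝ) × (Fin r → Fin n → ℝ) |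
    1 / 1000 ^ 2 * (n : ℝ) ^ 2 * r ≤ frobSq (plant p.1 p.2) ∧
      frobSq (plant p.1 p.2) ≤ 12 ^ 2 * (n : ℝ) ^ 2 * r} with hG
  have hcover : (Set.univ : Set _) ⊆ G ∪ (B₁ ∪ B₂ ∪ B₃ ∪ B₄) := by
    intro p _
    by_contra hp
    simp only [Set.mem_union, not_or] at hp
    obtain ⟨hpG, ⟨⟨hp1, hp2⟩, hp3⟩, hp4⟩ := hp
    simp only [hB₁, hB₂, hB₃, hB₄, Set.mem_ofPred_eq, not_le, not_lt] at hp1 hp2 hp3 hp4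
    push_cast at hp1 hp2
    refine hpG ⟨?_, ?_⟩
    · refine le_trans ?_ hp3
      have := mul_le_mul_of_nonneg_left hp1.le (by positivity : (0 : ℝ) ≤ n / 1000)
      refine le_trans (le_of_eq ?_) this
      ring
    · refine hp4.trans ?_
      have := mul_le_mul_of_nonneg_left hp2.le (by positivity : (0 : ℝ) ≤ 12 * n)
      refine this.trans (le_of_eq ?_)
      ring
  rw [tsub_le_iff_right]
  calc (1 : ℝ≥0∞) = P Set.univ := measure_univ.symm
    _ ≤ P (G ∪ (B₁ ∪ B₂ ∪ B₃ ∪ B₄)) := measure_mono hcover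
    _ ≤ P G + P (B₁ ∪ B₂ ∪ B₃ ∪ B₄) := measure_union_le _ _
    _ ≤ P G + (P B₁ + P B₂ + P B₃ + P B₄) := by
        gcongr
        refine (measure_union_le _ _).trans ?_
        gcongr
        refine (measure_union_le _ _).trans ?_
        gcongr
        exact measure_union_le _ _
    _ ≤ P G + (e + e + e + e) := by gcongr
    _ ≤ P G + ENNReal.ofReal (Real.exp (-(1 * n))) := by gcongr

end
end

section
/- There exist universal constants c > 0 and n₀ such that for all n ≥ n₀, r ≥ 1, and k with n·r ≤ k ≤ n²: if a randomized t-round adaptive algorithm making k exact linear measurements per round is such that for every n×n real matrix A it outputs a matrix B of rank at most r satisfying ‖A − B‖ ≤ 2·σ_{r+1}(A) with probability at least 99/100 (over the seed), then t ≥ c·log(n²/k)/log log n. -/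
/-!
The hard input is `A = G + s • u vᵀ`, where `G` has independent standard Gaussian entries, `u, v` are
independent uniformly random sign vectors, and `s = 144 / √n`, so that the plant `s • u vᵀ` has
operator norm `144 √n`. With overwhelming probability `‖G‖ ≤ 12 √n` (`bad_event`), hence
`σ_{r+1}(A) ≤ 12 √n`, and a successful output `B` satisfies `‖s • u vᵀ - B‖ ≤ 36 √n`. Testing this
against pairs of sign vectors gives the relation `Close v u B` (`close_of_success`), which a fixed
matrix `B` satisfies for only an exponentially small fraction of the sign pairs (`count_close`).

It remains to show that few rounds reveal too little about the plant. The queries being orthonormal,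
the transcript on the input `G + x` has an explicit density with respect to independent standard
Gaussian responses (`girsanov`). Consequently an event on which the queries have seen at most energy
`B`, that is `∑ ‖Q x‖² ≤ B`, is likelier than under pure noise by a factor of about `exp B` at most
(`change_measure`, `avg_bound`). Under pure noise the transcript is independent of `u, v`, and a fixed
orthonormal system of `k` measurements captures energy `T` of `u ⊗ v` with probability at most
`exp (k / (2 n) - T / (8 n))` (`chaos_tail`). Comparing exponents, the energy captured grows from
round to round by at most the constant factor `K = 331777 = 16 * 144 ^ 2 + 1`: except with small
probability, round `j` (counted from zero) captures at most `232 K ^ j k` (`escape_bound`).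

As long as `232 K ^ t k ≤ n ^ 2`, the total energy `s² ∑ ‖Q (u ⊗ v)‖²` is at most `n / 16`, which is
too little to overcome the probability `2 exp (-n / 8)` of guessing the plant (`final_bound`), so every
deterministic algorithm fails on average (`det_bound`). Averaging over the seed transfers this to
randomized algorithms (`no_few_rounds`). Therefore `t` is at least a constant times `log (n ^ 2 / k)`,
which exceeds the required bound because `log log n ≥ 1` for `n ≥ 200`. The case `t = 0`, in which
`n ^ 2 / k` may be close to `1`, is excluded separately (`no_zero_rounds`).
-/

open MeasureTheory ProbabilityTheory Matrix
open scoped ENNReal Classical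

noncomputable section

/-! ### Standard Gaussian vectors -/

/-- The law of a standard Gaussian vector indexed by `ι`, the same measure as the `stdGaussian`
defined above. -/
def gam (ι : Type*) [Fintype ι] : Measure (ι → ℝ) :=
  Measure.pi fun _ => gaussianReal 0 1

instance gam_prob (ι : Type*) [Fintype ι] : IsProbabilityMeasure (gam ι) := by
  unfold gam; infer_instance

lemma sqNorm_nonneg {ι : Type*} [Fintype ι] (x : ι → ℝ) : 0 ≤ sqNorm x :=
  Finset.sum_nonneg fun _ _ => sq_nonneg _

lemma sqNorm_eq_dot {ι : Type*} [Fintype ι] (x : ι → ℝ) : sqNorm x = x ⬝ᵥ x := by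
  simp [sqNorm, dotProduct, sq]

lemma lintegral_gam_prod {ι : Type*} [Fintype ι] (f : ι → ℝ → ℝ≥0∞)
    (hf : ∀ i, Measurable (f i)) :
    ∫⁻ g, ∏ i, f i (g i) ∂(gam ι) = ∏ i, ∫⁻ x, f i x ∂(gaussianReal 0 1) := by
  have hind : iIndepFun (fun (i : ι) (g : ι → ℝ) => f i (g i)) (gam ι) :=
    iIndepFun_pi (μ := fun _ : ι => gaussianReal 0 1) (X := fun i => f i)
      (fun i => (hf i).aemeasurable)
  have h := lintegral_prod_eq_prod_lintegral_of_indepFun Finset.univ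
    (fun (i : ι) (g : ι → ℝ) => f i (g i)) hind
    (fun i => (hf i).comp (measurable_pi_apply i))
  rw [h]
  refine Finset.prod_congr rfl fun i _ => ?_
  exact (measurePreserving_eval (fun _ : ι => gaussianReal 0 1) i).lintegral_comp (hf i)

lemma lintegral_exp_mul_gaussian (a : ℝ) :
    ∫⁻ x, ENNReal.ofReal (Real.exp (a * x)) ∂(gaussianReal 0 1)
      = ENNReal.ofReal (Real.exp (a ^ 2 / 2)) := by
  rw [← ofReal_integral_eq_lintegral_ofReal (integrable_exp_mul_gaussianReal a)
    (Filter.Eventually.of_forall fun _ => (Real.exp_pos _).le)]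
  have := congrFun (mgf_fun_id_gaussianReal (μ := 0) (v := 1)) a
  simp only [mgf] at this
  rw [this]; simp

/-- The moment generating function of a standard Gaussian vector. -/
lemma lintegral_exp_dot_gam {ι : Type*} [Fintype ι] (y : ι → ℝ) :
    ∫⁻ g, ENNReal.ofReal (Real.exp (y ⬝ᵥ g)) ∂(gam ι)
      = ENNReal.ofReal (Real.exp (sqNorm y / 2)) := by
  have : ∀ g : ι → ℝ, ENNReal.ofReal (Real.exp (y ⬝ᵥ g))
      = ∏ i, ENNReal.ofReal (Real.exp (y i * g i)) := fun g => by
    rw [dotProduct, Real.exp_sum, ENNReal.ofReal_prod_of_nonneg fun _ _ => (Real.exp_pos _).le]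
  simp_rw [this]
  rw [lintegral_gam_prod (fun i x => ENNReal.ofReal (Real.exp (y i * x)))
    (fun i => by fun_prop)]
  simp_rw [lintegral_exp_mul_gaussian]
  rw [← ENNReal.ofReal_prod_of_nonneg fun _ _ => (Real.exp_pos _).le, ← Real.exp_sum, sqNorm,
    Finset.sum_div]

lemma lintegral_exp_sq_gaussian_s8 {a : ℝ} (h0 : 0 ≤ a) (h1 : a ≤ 1 / 4) :
    ∫⁻ x, ENNReal.ofReal (Real.exp (a * x ^ 2)) ∂(gaussianReal 0 1)
      ≤ ENNReal.ofReal (Real.exp (2 * a)) := by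
  rw [gaussianReal_of_var_ne_zero _ one_ne_zero,
    lintegral_withDensity_eq_lintegral_mul _ (measurable_gaussianPDF 0 1) (by fun_prop)]
  have hb : 0 < 1 / 2 - a := by linarith
  have heq : ∀ x : ℝ, (gaussianPDF 0 1 * fun x => ENNReal.ofReal (Real.exp (a * x ^ 2))) x
      = ENNReal.ofReal ((Real.sqrt (2 * Real.pi))⁻¹ * Real.exp (-(1 / 2 - a) * x ^ 2)) := by
    intro x
    simp only [Pi.mul_apply, gaussianPDF, gaussianPDFReal]
    rw [← ENNReal.ofReal_mul (by positivity), mul_assoc, ← Real.exp_add]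
    congr 3
    · simp
    · simp
      ring
  simp_rw [heq]
  rw [← ofReal_integral_eq_lintegral_ofReal ((integrable_exp_neg_mul_sq hb).const_mul _)
    (Filter.Eventually.of_forall fun _ => by positivity)]
  apply ENNReal.ofReal_le_ofReal
  rw [integral_const_mul, integral_gaussian]
  -- The integral equals `(1 - 2 a)^{-1/2}`.
  have h2 : 0 < 1 - 2 * a := by linarith
  rw [← Real.sqrt_inv, ← Real.sqrt_mul (by positivity)]
  have : (2 * Real.pi)⁻¹ * (Real.pi / (1 / 2 - a)) = (1 - 2 * a)⁻¹ := by
    have := Real.pi_pos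
    field_simp
  rw [this]
  apply Real.sqrt_le_iff.2 ⟨(Real.exp_pos _).le, ?_⟩
  rw [← Real.exp_nat_mul]
  apply inv_le_of_inv_le₀ (Real.exp_pos _)
  rw [← Real.exp_neg]
  have h3 : (1 + 4 * a) * Real.exp (-(((2 : ℕ) : ℝ) * (2 * a))) ≤ 1 := by
    have h4 : 1 + 4 * a ≤ Real.exp (4 * a) := by linarith [Real.add_one_le_exp (4 * a)]
    calc _ ≤ Real.exp (4 * a) * Real.exp (-(((2 : ℕ) : ℝ) * (2 * a))) := by gcongr
      _ = 1 := by rw [← Real.exp_add]; simp; ring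
  have h5 : 1 ≤ (1 + 4 * a) * (1 - 2 * a) := by nlinarith
  nlinarith

lemma lintegral_exp_sum_sq_gam {ι : Type*} [Fintype ι] (a : ι → ℝ) (h0 : ∀ i, 0 ≤ a i)
    (h1 : ∀ i, a i ≤ 1 / 4) :
    ∫⁻ g, ENNReal.ofReal (Real.exp (∑ i, a i * g i ^ 2)) ∂(gam ι)
      ≤ ENNReal.ofReal (Real.exp (2 * ∑ i, a i)) := by
  have : ∀ g : ι → ℝ, ENNReal.ofReal (Real.exp (∑ i, a i * g i ^ 2))
      = ∏ i, ENNReal.ofReal (Real.exp (a i * g i ^ 2)) := fun g => by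
    rw [Real.exp_sum, ENNReal.ofReal_prod_of_nonneg fun _ _ => (Real.exp_pos _).le]
  simp_rw [this]
  rw [lintegral_gam_prod (fun i x => ENNReal.ofReal (Real.exp (a i * x ^ 2)))
    (fun i => by fun_prop), Finset.mul_sum, Real.exp_sum,
    ENNReal.ofReal_prod_of_nonneg fun _ _ => (Real.exp_pos _).le]
  exact Finset.prod_le_prod' fun i _ => lintegral_exp_sq_gaussian_s8 (h0 i) (h1 i)

lemma charFun_gam {ι : Type*} [Fintype ι] (y : ι → ℝ) :
    ∫ g, Complex.exp ((y ⬝ᵥ g : ℝ) * Complex.I) ∂(gam ι)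
      = Complex.exp (-(sqNorm y : ℝ) / 2) := by
  have : ∀ g : ι → ℝ, Complex.exp ((y ⬝ᵥ g : ℝ) * Complex.I)
      = ∏ i, Complex.exp ((y i * g i : ℝ) * Complex.I) := fun g => by
    rw [dotProduct, ← Complex.exp_sum, ← Finset.sum_mul]; push_cast; rfl
  simp_rw [this]
  rw [gam, integral_fintype_prod_eq_prod (fun i (x : ℝ) => Complex.exp ((y i * x : ℝ) * Complex.I))]
  have h1 : ∀ i, ∫ x, Complex.exp ((y i * x : ℝ) * Complex.I) ∂(gaussianReal 0 1)
      = Complex.exp (-(y i : ℂ) ^ 2 / 2) := fun i => by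
    have := charFun_gaussianReal (μ := 0) (v := 1) (y i)
    rw [charFun_apply_real] at this
    push_cast
    rw [this]
    congr 1
    simp; ring
  simp_rw [h1]
  rw [← Complex.exp_sum, sqNorm]
  congr 1
  push_cast
  rw [← Finset.sum_neg_distrib, Finset.sum_div]

/-- If `M₁ M₁ᵀ + M₂ M₂ᵀ = 1` and `g₁, g₂` are independent standard Gaussian vectors, then
`M₁ g₁ + M₂ g₂` is a standard Gaussian vector. -/
lemma map_gam_prod {ι κ κ' : Type*} [Fintype ι] [DecidableEq ι] [Fintype κ] [Fintype κ']
    (M₁ : Matrix ι κ ℝ)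
    (M₂ : Matrix ι κ' ℝ) (h : M₁ * M₁ᵀ + M₂ * M₂ᵀ = 1) :
    ((gam κ).prod (gam κ')).map (fun p => M₁ *ᵥ p.1 + M₂ *ᵥ p.2) = gam ι := by
  have hm : Measurable (fun p : (κ → ℝ) × (κ' → ℝ) => M₁ *ᵥ p.1 + M₂ *ᵥ p.2) := by
    refine Continuous.measurable ?_
    fun_prop
  have := Measure.isProbabilityMeasure_map (μ := (gam κ).prod (gam κ')) hm.aemeasurable
  refine charFun_eq_pi_iff.1 fun t => ?_
  have ht : ∏ i, charFun (gaussianReal 0 1) (t i)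
      = Complex.exp (-(sqNorm (fun i => t i) : ℝ) / 2) := by
    rw [← charFun_gam, gam, ← charFun_pi, charFun_apply, ← MeasurableEquiv.coe_toLp,
      integral_map_equiv]
    simp [PiLp.inner_apply, dotProduct]
  rw [ht, charFun_apply, ← MeasurableEquiv.coe_toLp, integral_map_equiv, integral_map
    hm.aemeasurable (Continuous.aestronglyMeasurable (by
      simp only [MeasurableEquiv.coe_toLp, PiLp.inner_apply]; fun_prop))]
  set y : ι → ℝ := fun i => t i with hy
  have e : ∀ p : (κ → ℝ) × (κ' → ℝ),
      Complex.exp ((inner ℝ ((MeasurableEquiv.toLp 2 (ι → ℝ)) (M₁ *ᵥ p.1 + M₂ *ᵥ p.2)) t : ℝ)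
        * Complex.I) = Complex.exp (((M₁ᵀ *ᵥ y) ⬝ᵥ p.1 : ℝ) * Complex.I)
          * Complex.exp (((M₂ᵀ *ᵥ y) ⬝ᵥ p.2 : ℝ) * Complex.I) := by
    intro p
    rw [← Complex.exp_add, ← add_mul]
    congr 2
    norm_cast
    have : (inner ℝ ((MeasurableEquiv.toLp 2 (ι → ℝ)) (M₁ *ᵥ p.1 + M₂ *ᵥ p.2)) t : ℝ)
      = y ⬝ᵥ (M₁ *ᵥ p.1 + M₂ *ᵥ p.2) := by
      simp [PiLp.inner_apply, dotProduct, hy]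
    rw [this, dotProduct_add, dotProduct_mulVec, dotProduct_mulVec, mulVec_transpose,
      mulVec_transpose]
  simp_rw [e]
  rw [integral_prod_mul (μ := gam κ) (ν := gam κ')
    (fun g => Complex.exp (((M₁ᵀ *ᵥ y) ⬝ᵥ g : ℝ) * Complex.I))
    (fun g => Complex.exp (((M₂ᵀ *ᵥ y) ⬝ᵥ g : ℝ) * Complex.I)), charFun_gam, charFun_gam,
    ← Complex.exp_add]
  congr 1
  have : sqNorm (M₁ᵀ *ᵥ y) + sqNorm (M₂ᵀ *ᵥ y) = sqNorm y := by
    simp only [sqNorm_eq_dot]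
    rw [dotProduct_mulVec, dotProduct_mulVec, vecMul_transpose, vecMul_transpose, mulVec_mulVec,
      mulVec_mulVec, ← add_dotProduct, ← add_mulVec, h, one_mulVec]
  rw [← this]; push_cast; ring

/-- Cameron–Martin formula for a standard Gaussian vector. -/
lemma cameron_martin {ι : Type*} [Fintype ι] (m : ι → ℝ) (f : (ι → ℝ) → ℝ≥0∞)
    (hf : Measurable f) :
    ∫⁻ g, f (g + m) ∂(gam ι)
      = ∫⁻ g, ENNReal.ofReal (Real.exp (m ⬝ᵥ g - sqNorm m / 2)) * f g ∂(gam ι) := by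
  have hd : Measurable fun g : ι → ℝ => ENNReal.ofReal (Real.exp (m ⬝ᵥ g - sqNorm m / 2)) := by
    unfold dotProduct; fun_prop
  have h1 : ∀ c : ℝ, (gaussianReal 0 1).withDensity
      (fun x => ENNReal.ofReal (Real.exp (c * x - c ^ 2 / 2))) = gaussianReal c 1 := fun c => by
    rw [gaussianReal_of_var_ne_zero _ one_ne_zero, gaussianReal_of_var_ne_zero _ one_ne_zero,
      ← withDensity_mul _ (measurable_gaussianPDF 0 1) (by fun_prop)]
    congr 1
    ext x
    simp only [Pi.mul_apply, gaussianPDF, gaussianPDFReal]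
    rw [← ENNReal.ofReal_mul (by positivity), mul_assoc, ← Real.exp_add]
    congr 3
    simp; ring
  have h2 : (gam ι).map (fun g => g + m)
      = (gam ι).withDensity fun g => ENNReal.ofReal (Real.exp (m ⬝ᵥ g - sqNorm m / 2)) := by
    have e1 : (gam ι).map (fun g => g + m) = Measure.pi fun i => gaussianReal (m i) 1 := by
      have := Measure.pi_map_pi (μ := fun _ : ι => gaussianReal 0 1)
        (f := fun i x => x + m i) (fun i => by fun_prop)
      simp only [gaussianReal_map_add_const, zero_add] at this
      exact this
    rw [e1]
    refine Measure.pi_eq fun s hs => ?_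
    rw [withDensity_apply _ (MeasurableSet.univ_pi hs), ← lintegral_indicator
      (MeasurableSet.univ_pi hs)]
    have e2 : ∀ g : ι → ℝ, (Set.univ.pi s).indicator
        (fun g => ENNReal.ofReal (Real.exp (m ⬝ᵥ g - sqNorm m / 2))) g
        = ∏ i, (s i).indicator
          (fun x => ENNReal.ofReal (Real.exp (m i * x - m i ^ 2 / 2))) (g i) := by
      intro g
      by_cases hg : g ∈ Set.univ.pi s
      · have : ∀ i, g i ∈ s i := fun i => hg i trivial
        simp only [Set.indicator_of_mem hg, Set.indicator_of_mem (this _)]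
        rw [← ENNReal.ofReal_prod_of_nonneg fun _ _ => (Real.exp_pos _).le, ← Real.exp_sum,
          dotProduct, sqNorm, Finset.sum_sub_distrib, Finset.sum_div]
      · rw [Set.indicator_of_notMem hg]
        simp only [Set.mem_pi, Set.mem_univ, true_imp_iff, not_forall] at hg
        obtain ⟨i, hi⟩ := hg
        exact (Finset.prod_eq_zero (Finset.mem_univ i) (Set.indicator_of_notMem hi _)).symm
    simp_rw [e2]
    rw [lintegral_gam_prod _ (fun i => Measurable.indicator (by fun_prop) (hs i))]
    refine Finset.prod_congr rfl fun i _ => ?_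
    rw [lintegral_indicator (hs i), ← withDensity_apply _ (hs i), h1]
  rw [← lintegral_map (f := f) (g := fun g => g + m) hf (by fun_prop), h2,
    lintegral_withDensity_eq_lintegral_mul _ hd hf]
  rfl

/-! ### Quadratic forms in Gaussian vectors and in random signs -/

lemma frobSq_eq_trace {κ ι : Type*} [Fintype κ] [Fintype ι] (V : Matrix κ ι ℝ) :
    frobSq V = (Vᵀ * V).trace := by
  simp only [frobSq, Matrix.trace, Matrix.diag, Matrix.mul_apply, Matrix.transpose_apply]
  rw [Finset.sum_comm]
  simp [sq]

lemma frobSq_transpose {κ ι : Type*} [Fintype κ] [Fintype ι] (V : Matrix κ ι ℝ) :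
    frobSq Vᵀ = frobSq V := by
  simp only [frobSq, Matrix.transpose_apply]
  exact Finset.sum_comm

lemma sqNorm_mulVec {κ ι : Type*} [Fintype κ] [Fintype ι] (V : Matrix κ ι ℝ) (x : ι → ℝ) :
    sqNorm (V *ᵥ x) = x ⬝ᵥ ((Vᵀ * V) *ᵥ x) := by
  rw [sqNorm_eq_dot, ← mulVec_mulVec, dotProduct_mulVec x, vecMul_transpose]

lemma sqNorm_smul {ι : Type*} [Fintype ι] (c : ℝ) (x : ι → ℝ) :
    sqNorm (c • x) = c ^ 2 * sqNorm x := by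
  simp [sqNorm, mul_pow, Finset.mul_sum]

lemma dot_sq_le {ι : Type*} [Fintype ι] (x y : ι → ℝ) :
    (x ⬝ᵥ y) ^ 2 ≤ sqNorm x * sqNorm y :=
  Finset.sum_mul_sq_le_sq_mul_sq _ _ _

/-- A matrix and its transpose satisfy the same operator norm bounds. -/
lemma sqNorm_transpose_le {κ ι : Type*} [Fintype κ] [Fintype ι] {V : Matrix κ ι ℝ} {K : ℝ}
    (hK : 0 ≤ K) (hV : ∀ x, sqNorm (V *ᵥ x) ≤ K * sqNorm x) (y : κ → ℝ) :
    sqNorm (Vᵀ *ᵥ y) ≤ K * sqNorm y := by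
  have h1 : sqNorm (Vᵀ *ᵥ y) = y ⬝ᵥ (V *ᵥ (Vᵀ *ᵥ y)) := by
    rw [sqNorm_mulVec, transpose_transpose, mulVec_mulVec]
  have h2 := dot_sq_le y (V *ᵥ (Vᵀ *ᵥ y))
  rw [← h1] at h2
  have h3 := mul_le_mul_of_nonneg_left (hV (Vᵀ *ᵥ y)) (sqNorm_nonneg y)
  rcases (sqNorm_nonneg (Vᵀ *ᵥ y)).eq_or_lt with h | h
  · rw [← h]
    exact mul_nonneg hK (sqNorm_nonneg y)
  · nlinarith

/-- Exponential moments of a positive semidefinite Gaussian quadratic form, by diagonalisation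
and rotation invariance. -/
lemma quad_gam {κ ι : Type*} [Fintype κ] [Fintype ι] (V : Matrix κ ι ℝ) {K l : ℝ}
    (hV : ∀ x, sqNorm (V *ᵥ x) ≤ K * sqNorm x) (hl : 0 ≤ l) (hlK : l * K ≤ 1 / 4) :
    ∫⁻ g, ENNReal.ofReal (Real.exp (l * sqNorm (V *ᵥ g))) ∂(gam ι)
      ≤ ENNReal.ofReal (Real.exp (2 * l * frobSq V)) := by
  have hS : (Vᵀ * V).IsHermitian := by
    have := Matrix.isHermitian_conjTranspose_mul_self V
    simpa [conjTranspose_eq_transpose_of_trivial] using this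
  set d := hS.eigenvalues with hd
  set U : Matrix ι ι ℝ := (hS.eigenvectorUnitary : Matrix ι ι ℝ) with hU
  have hUU : U * Uᵀ = 1 := by
    have := Unitary.coe_mul_star_self hS.eigenvectorUnitary
    simpa [Matrix.star_eq_conjTranspose, conjTranspose_eq_transpose_of_trivial] using this
  have hUU' : Uᵀ * U = 1 := by
    have := Unitary.coe_star_mul_self hS.eigenvectorUnitary
    simpa [Matrix.star_eq_conjTranspose, conjTranspose_eq_transpose_of_trivial] using this
  have hdiag : Uᵀ * (Vᵀ * V) * U = diagonal d := by
    have := hS.conjStarAlgAut_star_eigenvectorUnitary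
    rw [Unitary.conjStarAlgAut_star_apply] at this
    simpa [Matrix.star_eq_conjTranspose, conjTranspose_eq_transpose_of_trivial] using this
  have hq : ∀ g : ι → ℝ, sqNorm (V *ᵥ (U *ᵥ g)) = ∑ i, d i * g i ^ 2 := by
    intro g
    rw [mulVec_mulVec, sqNorm_mulVec, transpose_mul,
      show Uᵀ * Vᵀ * (V * U) = Uᵀ * (Vᵀ * V) * U by simp [Matrix.mul_assoc], hdiag]
    simp only [dotProduct, mulVec_diagonal]
    exact Finset.sum_congr rfl fun i _ => by ring
  have hUn : ∀ g : ι → ℝ, sqNorm (U *ᵥ g) = sqNorm g := by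
    intro g
    rw [sqNorm_mulVec, hUU', one_mulVec, ← sqNorm_eq_dot]
  have hdi : ∀ i, d i = sqNorm (V *ᵥ (U *ᵥ Pi.single i 1)) := fun i => by
    rw [hq]; simp [Pi.single_apply]
  have hd0 : ∀ i, 0 ≤ d i := fun i => by rw [hdi]; exact sqNorm_nonneg _
  have hdK : ∀ i, d i ≤ K := fun i => by
    rw [hdi]
    refine (hV _).trans ?_
    rw [hUn]; simp [sqNorm, Pi.single_apply]
  have htr : ∑ i, d i = frobSq V := by
    rw [frobSq_eq_trace, ← Matrix.trace_diagonal, ← hdiag, Matrix.trace_mul_comm, ← mul_assoc,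
      hUU, one_mul]
  have hmap := map_gam_prod U (0 : Matrix ι ι ℝ) (by simpa using hUU)
  have hmeas : Measurable fun g : ι → ℝ => ENNReal.ofReal (Real.exp (l * sqNorm (V *ᵥ g))) := by
    refine Measurable.ennreal_ofReal (Continuous.measurable ?_)
    unfold sqNorm; fun_prop
  have hmU : Measurable fun p : (ι → ℝ) × (ι → ℝ) => U *ᵥ p.1 + (0 : Matrix ι ι ℝ) *ᵥ p.2 :=
    Continuous.measurable (by fun_prop)
  rw [← hmap, lintegral_map hmeas hmU]
  simp only [zero_mulVec, add_zero, hq]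
  have hm1 : Measurable fun g : ι → ℝ =>
      ENNReal.ofReal (Real.exp (l * ∑ i, d i * g i ^ 2)) := by fun_prop
  rw [lintegral_prod _ (by fun_prop)]
  simp only [lintegral_const, measure_univ, mul_one]
  have := lintegral_exp_sum_sq_gam (fun i => l * d i) (fun i => mul_nonneg hl (hd0 i))
    (fun i => (mul_le_mul_of_nonneg_left (hdK i) hl).trans hlK)
  rw [← htr]
  simpa [Finset.mul_sum, mul_assoc] using this

/-- The sign vector encoded by a Boolean vector. -/
def sgv {ι : Type*} (ε : ι → Bool) : ι → ℝ := fun i => if ε i then 1 else -1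

lemma sgv_sq {ι : Type*} (ε : ι → Bool) (i : ι) : sgv ε i ^ 2 = 1 := by
  unfold sgv; split_ifs <;> norm_num

lemma sqNorm_sgv {n : ℕ} (ε : Fin n → Bool) : sqNorm (sgv ε) = n := by
  simp [sqNorm, sgv_sq]

/-- Random sign vectors are sub-Gaussian. -/
lemma sum_exp_sgv {ι : Type*} [Fintype ι] [DecidableEq ι] (y : ι → ℝ) :
    ∑ ε : ι → Bool, Real.exp (y ⬝ᵥ sgv ε)
      ≤ 2 ^ Fintype.card ι * Real.exp (sqNorm y / 2) := by
  have h1 : ∀ ε : ι → Bool, Real.exp (y ⬝ᵥ sgv ε)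
      = ∏ i, (fun (i : ι) (b : Bool) => Real.exp (y i * if b then 1 else -1)) i (ε i) := by
    intro ε; rw [dotProduct, Real.exp_sum]; rfl
  simp_rw [h1]
  have h2 := Finset.prod_univ_sum (fun _ : ι => (Finset.univ : Finset Bool))
    (fun (i : ι) (b : Bool) => Real.exp (y i * if b then 1 else -1))
  rw [Fintype.piFinset_univ] at h2
  rw [← h2]
  calc _ ≤ ∏ i, (2 * Real.exp (y i ^ 2 / 2)) := by
        refine Finset.prod_le_prod (fun i _ => by positivity) fun i _ => ?_
        have := Real.cosh_le_exp_half_sq (y i)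
        rw [Real.cosh_eq] at this
        simp
        linarith
    _ = _ := by
        rw [Finset.prod_mul_distrib, ← Real.exp_sum, Finset.prod_const, Finset.card_univ, sqNorm,
          Finset.sum_div]

/-- Exponential moments of a positive semidefinite quadratic form in random signs: writing the
exponential of the form as a Gaussian average of exponentials of linear forms reduces the bound to
the Gaussian case. -/
lemma quad_sgv {κ ι : Type*} [Fintype κ] [Fintype ι] [DecidableEq ι] (V : Matrix κ ι ℝ)
    {K l : ℝ} (hK : 0 ≤ K)
    (hV : ∀ x, sqNorm (V *ᵥ x) ≤ K * sqNorm x) (hl : 0 ≤ l) (hlK : l * K ≤ 1 / 4) :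
    ∑ ε : ι → Bool, Real.exp (l * sqNorm (V *ᵥ sgv ε))
      ≤ 2 ^ Fintype.card ι * Real.exp (2 * l * frobSq V) := by
  have hs : Real.sqrt (2 * l) ^ 2 = 2 * l := Real.sq_sqrt (by linarith)
  rw [← ENNReal.ofReal_le_ofReal_iff (by positivity),
    ENNReal.ofReal_sum_of_nonneg fun _ _ => (Real.exp_pos _).le]
  have h1 : ∀ ε : ι → Bool, ENNReal.ofReal (Real.exp (l * sqNorm (V *ᵥ sgv ε)))
      = ∫⁻ g, ENNReal.ofReal (Real.exp ((Real.sqrt (2 * l) • (V *ᵥ sgv ε)) ⬝ᵥ g)) ∂(gam κ) := by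
    intro ε
    rw [lintegral_exp_dot_gam, sqNorm_smul, hs]
    congr 2; ring
  simp_rw [h1]
  rw [← lintegral_finsetSum _ fun ε _ => by unfold dotProduct; fun_prop]
  calc _ ≤ ∫⁻ g, 2 ^ Fintype.card ι *
        ENNReal.ofReal (Real.exp (l * sqNorm (Vᵀ *ᵥ g))) ∂(gam κ) := by
        refine lintegral_mono fun g => ?_
        rw [← ENNReal.ofReal_sum_of_nonneg fun _ _ => (Real.exp_pos _).le,
          show (2 : ℝ≥0∞) ^ Fintype.card ι = ENNReal.ofReal (2 ^ Fintype.card ι) by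
            rw [ENNReal.ofReal_pow (by norm_num)]; simp,
          ← ENNReal.ofReal_mul (by positivity)]
        apply ENNReal.ofReal_le_ofReal
        have := sum_exp_sgv (Real.sqrt (2 * l) • (Vᵀ *ᵥ g))
        rw [sqNorm_smul, hs, show 2 * l * sqNorm (Vᵀ *ᵥ g) / 2 = l * sqNorm (Vᵀ *ᵥ g) by ring]
          at this
        refine le_of_eq_of_le (Finset.sum_congr rfl fun ε _ => ?_) this
        rw [smul_dotProduct, smul_dotProduct, mulVec_transpose, ← dotProduct_mulVec,
          dotProduct_comm]
    _ ≤ 2 ^ Fintype.card ι * ENNReal.ofReal (Real.exp (2 * l * frobSq Vᵀ)) := by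
        rw [lintegral_const_mul _ (Measurable.ennreal_ofReal (Continuous.measurable
          (by unfold sqNorm; fun_prop)))]
        gcongr
        exact quad_gam _ (sqNorm_transpose_le hK hV) hl hlK
    _ = _ := by
        rw [frobSq_transpose, ENNReal.ofReal_mul (by positivity), ENNReal.ofReal_pow (by norm_num)]
        simp

lemma sqNorm_vec {n : ℕ} (A : Matrix (Fin n) (Fin n) ℝ) : sqNorm (_root_.vec n A) = frobSq A := by
  simp only [sqNorm, frobSq, _root_.vec]
  rw [← Fintype.sum_prod_type']
  exact Equiv.sum_comp finProdFinEquiv.symm (fun p : Fin n × Fin n => A p.1 p.2 ^ 2)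

lemma sqNorm_tensor {n : ℕ} (u v : Fin n → ℝ) : sqNorm (tensor u v) = sqNorm u * sqNorm v := by
  rw [tensor, sqNorm_vec]
  simp [frobSq, sqNorm, mul_pow, Finset.sum_mul_sum]

lemma dot_tensor {n : ℕ} (q : Fin (n * n) → ℝ) (u v : Fin n → ℝ) :
    q ⬝ᵥ tensor u v = ∑ i, ∑ j, q (finProdFinEquiv (i, j)) * (u i * v j) := by
  rw [← Fintype.sum_prod_type', dotProduct, ← Equiv.sum_comp finProdFinEquiv]
  simp [tensor, _root_.vec]

/-- Matrices with orthonormal rows are contractions. -/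
lemma sqNorm_orth_le {κ ι : Type*} [Fintype κ] [DecidableEq κ] [Fintype ι] {Q : Matrix κ ι ℝ}
    (hQ : Q * Qᵀ = 1) (a : ι → ℝ) : sqNorm (Q *ᵥ a) ≤ sqNorm a := by
  have h : ∀ y, sqNorm (Qᵀ *ᵥ y) ≤ 1 * sqNorm y := fun y => by
    rw [sqNorm_mulVec, transpose_transpose, hQ, one_mulVec, ← sqNorm_eq_dot, one_mul]
  simpa using sqNorm_transpose_le zero_le_one h a

/-- For a fixed orthonormal system of `k` measurements and random signs `u, v`, the captured energy
`‖Q (u ⊗ v)‖²` has exponential moments at scale `n`, of the size predicted by its mean `k`. -/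
lemma chaos {n k : ℕ} (hn : 0 < n) (Q : Matrix (Fin k) (Fin (n * n)) ℝ) (hQ : Q * Qᵀ = 1) :
    ∑ v : Fin n → Bool, ∑ u : Fin n → Bool,
        Real.exp (1 / (8 * n) * sqNorm (Q *ᵥ tensor (sgv u) (sgv v)))
      ≤ 2 ^ n * 2 ^ n * Real.exp (k / (2 * n)) := by
  have hn' : (0 : ℝ) < n := by exact_mod_cast hn
  let A : (Fin n → ℝ) → Matrix (Fin k) (Fin n) ℝ := fun v =>
    Matrix.of fun q i => ∑ j, Q q (finProdFinEquiv (i, j)) * v j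
  let W : Matrix (Fin k × Fin n) (Fin n) ℝ := Matrix.of fun p j => Q p.1 (finProdFinEquiv (p.2, j))
  have hA : ∀ u v, Q *ᵥ tensor u v = A v *ᵥ u := by
    intro u v
    ext q
    rw [mulVec, dot_tensor]
    simp only [mulVec, dotProduct, A, Matrix.of_apply, Finset.sum_mul]
    exact Finset.sum_congr rfl fun i _ => Finset.sum_congr rfl fun j _ => by ring
  have hAW : ∀ v, frobSq (A v) = sqNorm (W *ᵥ v) := by
    intro v
    rw [sqNorm, Fintype.sum_prod_type]
    rfl
  have hWn : ∀ v, sqNorm (W *ᵥ v) ≤ n * sqNorm v := by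
    intro v
    rw [← hAW, frobSq, Finset.sum_comm]
    have : ∀ i, ∑ q, A v q i ^ 2 ≤ sqNorm v := by
      intro i
      have h1 := sqNorm_orth_le hQ (tensor (Pi.single i 1) v)
      rw [hA, sqNorm_tensor] at h1
      have h2 : sqNorm (Pi.single i (1 : ℝ) : Fin n → ℝ) = 1 := by
        simp [sqNorm, Pi.single_apply]
      rw [h2, one_mul] at h1
      simpa [sqNorm] using h1
    refine (Finset.sum_le_sum fun i _ => this i).trans ?_
    simp
  have hWf : frobSq W = k := by
    have h1 : frobSq W = frobSq Qᵀ := by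
      rw [frobSq_transpose, frobSq, frobSq, Fintype.sum_prod_type]
      refine Finset.sum_congr rfl fun q _ => ?_
      rw [← Fintype.sum_prod_type', ← Equiv.sum_comp finProdFinEquiv]
      rfl
    rw [h1, frobSq_eq_trace, transpose_transpose, hQ]
    simp
  have h1 : ∀ v : Fin n → Bool, ∑ u : Fin n → Bool,
        Real.exp (1 / (8 * n) * sqNorm (Q *ᵥ tensor (sgv u) (sgv v)))
      ≤ 2 ^ n * Real.exp (1 / (4 * n) * sqNorm (W *ᵥ sgv v)) := by
    intro v
    simp_rw [hA]
    have := quad_sgv (A (sgv v)) (K := n) (l := 1 / (8 * n)) hn'.le (fun x => by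
      rw [← hA]
      refine (sqNorm_orth_le hQ _).trans ?_
      rw [sqNorm_tensor, sqNorm_sgv, mul_comm]) (by positivity) (by
        field_simp; norm_num)
    rw [Fintype.card_fin, hAW] at this
    refine this.trans (le_of_eq ?_)
    congr 3
    field_simp; norm_num
  refine (Finset.sum_le_sum fun v _ => h1 v).trans ?_
  rw [← Finset.mul_sum, mul_assoc]
  gcongr
  have := quad_sgv W (K := n) (l := 1 / (4 * n)) hn'.le hWn (by positivity) (by
        field_simp; norm_num)
  rw [Fintype.card_fin, hWf] at this
  refine this.trans (le_of_eq ?_)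
  congr 2
  field_simp; norm_num

/-- Tail bound for the energy captured by a fixed orthonormal system of measurements. -/
lemma chaos_tail {n k : ℕ} (hn : 0 < n) (Q : Matrix (Fin k) (Fin (n * n)) ℝ) (hQ : Q * Qᵀ = 1)
    (T : ℝ) :
    ∑ v : Fin n → Bool, ∑ u : Fin n → Bool,
        (if T < sqNorm (Q *ᵥ tensor (sgv u) (sgv v)) then (1 : ℝ) else 0)
      ≤ 2 ^ n * 2 ^ n * Real.exp (k / (2 * n) - T / (8 * n)) := by
  have hn' : (0 : ℝ) < n := by exact_mod_cast hn
  rw [Real.exp_sub, ← mul_div_assoc, le_div_iff₀ (Real.exp_pos _)]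
  refine le_trans ?_ (chaos hn Q hQ)
  rw [Finset.sum_mul]
  refine Finset.sum_le_sum fun v _ => ?_
  rw [Finset.sum_mul]
  refine Finset.sum_le_sum fun u _ => ?_
  split_ifs with h
  · rw [one_mul, Real.exp_le_exp, div_eq_inv_mul, one_div]
    gcongr
  · rw [zero_mul]; positivity

/-- Hoeffding bound: two independent random sign vectors have overlap at least `n / 2` with
exponentially small probability. -/
lemma hoeffding_sgv {n : ℕ} (w : Fin n → Bool) :
    ∑ u : Fin n → Bool, (if (n : ℝ) / 2 ≤ |sgv w ⬝ᵥ sgv u| then (1 : ℝ) else 0)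
      ≤ 2 ^ n * (2 * Real.exp (-n / 8)) := by
  have h1 := sum_exp_sgv ((1 / 2 : ℝ) • sgv w)
  have h2 := sum_exp_sgv ((-1 / 2 : ℝ) • sgv w)
  rw [sqNorm_smul, sqNorm_sgv, Fintype.card_fin] at h1 h2
  have h3 : ∀ u : Fin n → Bool, (if (n : ℝ) / 2 ≤ |sgv w ⬝ᵥ sgv u| then (1 : ℝ) else 0)
      ≤ Real.exp (-n / 4) * (Real.exp (((1 / 2 : ℝ) • sgv w) ⬝ᵥ sgv u)
        + Real.exp (((-1 / 2 : ℝ) • sgv w) ⬝ᵥ sgv u)) := by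
    intro u
    rw [smul_dotProduct, smul_dotProduct, smul_eq_mul, smul_eq_mul]
    split_ifs with h
    · rw [mul_add, ← Real.exp_add, ← Real.exp_add]
      rcases le_abs.1 h with h | h
      · have := Real.one_le_exp (x := -n / 4 + 1 / 2 * (sgv w ⬝ᵥ sgv u)) (by linarith)
        linarith [Real.exp_pos (-n / 4 + -1 / 2 * (sgv w ⬝ᵥ sgv u))]
      · have := Real.one_le_exp (x := -n / 4 + -1 / 2 * (sgv w ⬝ᵥ sgv u)) (by linarith)
        linarith [Real.exp_pos (-n / 4 + 1 / 2 * (sgv w ⬝ᵥ sgv u))]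
    · positivity
  refine (Finset.sum_le_sum fun u _ => h3 u).trans ?_
  rw [← Finset.mul_sum, Finset.sum_add_distrib]
  calc _ ≤ Real.exp (-n / 4) * (2 ^ n * Real.exp ((1 / 2) ^ 2 * n / 2)
        + 2 ^ n * Real.exp ((-1 / 2) ^ 2 * n / 2)) := by gcongr
    _ = 2 ^ n * (2 * (Real.exp (-n / 4) * Real.exp (n / 8))) := by
        rw [show ((1 : ℝ) / 2) ^ 2 * n / 2 = n / 8 by ring,
          show ((-1 : ℝ) / 2) ^ 2 * n / 2 = n / 8 by ring]
        ring
    _ = _ := by rw [← Real.exp_add]; congr 3; ring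

/-! ### Transcripts of adaptive algorithms and change of measure -/

/-- The part of a full transcript available before round `j`. -/
def hist {k t : ℕ} (h : Fin t → Fin k → ℝ) (j : Fin t) : Fin (j : ℕ) → Fin k → ℝ :=
  fun i => h ⟨i.1, i.isLt.trans j.isLt⟩

theorem resp_eq {N k t : ℕ} (Q : QueryMaps N k t) (a : Fin N → ℝ) (j : Fin t) :
    Q.resp a j = Q j (hist (Q.resp a) j) *ᵥ a := by
  rw [QueryMaps.resp]
  rfl

theorem resp_congr {N k t : ℕ} (Q : QueryMaps N k t) (a b : Fin N → ℝ)
    (hab : ∀ j h, Q j h *ᵥ a = Q j h *ᵥ b) : Q.resp a = Q.resp b := by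
  have key : ∀ m : ℕ, ∀ j : Fin t, (j : ℕ) = m → Q.resp a j = Q.resp b j := by
    intro m
    induction m using Nat.strong_induction_on with
    | _ m ih =>
      intro j hj
      rw [resp_eq, resp_eq]
      have : hist (Q.resp a) j = hist (Q.resp b) j := by
        funext i
        exact ih i.1 (by have := i.isLt; omega) _ rfl
      rw [this, hab]
  funext j
  exact key j j rfl

theorem measurable_resp {Ω : Type*} [MeasurableSpace Ω] {N k t : ℕ} (Qf : Ω → QueryMaps N k t)
    (hQ : ∀ (j : Fin t) (i : Fin k) (l : Fin N),
      Measurable fun p : Ω × (Fin (j : ℕ) → Fin k → ℝ) => Qf p.1 j p.2 i l) :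
    Measurable fun p : Ω × (Fin N → ℝ) => (Qf p.1).resp p.2 := by
  have key : ∀ m : ℕ, ∀ j : Fin t, (j : ℕ) = m →
      Measurable fun p : Ω × (Fin N → ℝ) => (Qf p.1).resp p.2 j := by
    intro m
    induction m using Nat.strong_induction_on with
    | _ m ih =>
      intro j hj
      have hh : Measurable fun p : Ω × (Fin N → ℝ) =>
          (p.1, hist ((Qf p.1).resp p.2) j) := by
        refine measurable_fst.prodMk (measurable_pi_lambda _ fun i => ?_)
        exact ih i.1 (by have := i.isLt; omega) _ rfl
      refine measurable_pi_lambda _ fun i => ?_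
      simp only [resp_eq, mulVec, dotProduct]
      refine Finset.measurable_sum _ fun l _ => ?_
      refine Measurable.mul ?_ ((measurable_pi_apply l).comp measurable_snd)
      exact (hQ j i l).comp hh
  exact measurable_pi_lambda _ fun j => key j j rfl

theorem measurable_resp_det {N k t : ℕ} (Q : QueryMaps N k t) (hQ : Q.Valid) :
    Measurable Q.resp := by
  have := measurable_resp (Ω := Unit) (fun _ => Q)
    (fun j i l => (hQ.1 j i l).comp measurable_snd)
  exact this.comp (measurable_const (a := ()) |>.prodMk measurable_id)

/-- The first query matrix, which depends on no response. -/
def firstQ {N k t : ℕ} (Q : QueryMaps N k (t + 1)) : Matrix (Fin k) (Fin N) ℝ :=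
  Q 0 (fun i => absurd i.2 (by simp))

/-- The algorithm that remains after the first round was answered by `r`. -/
def peel {N k t : ℕ} (Q : QueryMaps N k (t + 1)) (r : Fin k → ℝ) : QueryMaps N k t :=
  fun j h => Q j.succ (Fin.cons (n := (j : ℕ)) (α := fun _ => Fin k → ℝ) r h)

theorem Q_zero {N k t : ℕ} (Q : QueryMaps N k (t + 1))
    (h : Fin ((0 : Fin (t + 1)) : ℕ) → Fin k → ℝ) : Q 0 h = firstQ Q := by
  unfold firstQ
  congr 1
  funext i
  exact absurd i.2 (by simp)

theorem measurable_cons {k m : ℕ} :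
    Measurable fun p : (Fin k → ℝ) × (Fin m → Fin k → ℝ) =>
      (Fin.cons (α := fun _ => Fin k → ℝ) p.1 p.2 : Fin (m + 1) → Fin k → ℝ) := by
  refine measurable_pi_lambda _ fun i => ?_
  refine Fin.cases ?_ (fun i => ?_) i
  · simpa using measurable_fst
  · simp only [Fin.cons_succ]
    fun_prop

theorem hist_cons {k t : ℕ} (r : Fin k → ℝ) (h : Fin t → Fin k → ℝ) (j : Fin t) :
    hist (Fin.cons (α := fun _ => Fin k → ℝ) r h : Fin (t + 1) → Fin k → ℝ) j.succ
      = (Fin.cons (n := (j : ℕ)) (α := fun _ => Fin k → ℝ) r (hist h j)) := by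
  funext i
  revert i
  exact Fin.cases rfl (fun i => rfl)

theorem peel_valid {N k t : ℕ} (Q : QueryMaps N k (t + 1)) (hQ : Q.Valid) (r : Fin k → ℝ) :
    (peel Q r).Valid := by
  refine ⟨fun j i l => ?_, fun j h => hQ.2.1 _ _, fun j i hij h => ?_⟩
  · exact (hQ.1 j.succ i l).comp (measurable_cons.comp (measurable_const.prodMk measurable_id))
  · have := hQ.2.2 j.succ i.succ (by simpa using hij)
      (Fin.cons (n := (j : ℕ)) (α := fun _ => Fin k → ℝ) r h)
    have e : QueryMaps.prefixHist (t := t + 1) (j := j.succ) (i := i.succ)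
        (Fin.cons (n := (j : ℕ)) (α := fun _ => Fin k → ℝ) r h) (by simpa using hij)
        = Fin.cons (n := (i : ℕ)) (α := fun _ => Fin k → ℝ) r (QueryMaps.prefixHist h hij) := by
      funext l
      revert l
      exact Fin.cases rfl (fun l => rfl)
    rw [e] at this
    exact this

theorem peel_orth {N k t : ℕ} (Q : QueryMaps N k (t + 1)) (hQ : Q.Valid) (r : Fin k → ℝ)
    (j : Fin t) (h : Fin (j : ℕ) → Fin k → ℝ) : peel Q r j h * (firstQ Q)ᵀ = 0 := by
  have := hQ.2.2 j.succ 0 (by simp) (Fin.cons (n := (j : ℕ)) (α := fun _ => Fin k → ℝ) r h)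
  have e := Q_zero Q (QueryMaps.prefixHist (t := t + 1) (j := j.succ) (i := 0)
    (Fin.cons (n := (j : ℕ)) (α := fun _ => Fin k → ℝ) r h) (by simp))
  rw [← e]
  exact this

theorem resp_zero {N k t : ℕ} (Q : QueryMaps N k (t + 1)) (a : Fin N → ℝ) :
    Q.resp a 0 = firstQ Q *ᵥ a := by
  have e := Q_zero Q (hist (Q.resp a) 0)
  rw [resp_eq, ← e]

theorem resp_succ {N k t : ℕ} (Q : QueryMaps N k (t + 1)) (a : Fin N → ℝ) (j : Fin t) :
    Q.resp a j.succ = (peel Q (firstQ Q *ᵥ a)).resp a j := by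
  have key : ∀ m : ℕ, ∀ j : Fin t, (j : ℕ) = m →
      Q.resp a j.succ = (peel Q (firstQ Q *ᵥ a)).resp a j := by
    intro m
    induction m using Nat.strong_induction_on with
    | _ m ih =>
      intro j hj
      rw [resp_eq, resp_eq]
      unfold peel
      congr 2
      funext i
      revert i
      refine Fin.cases (resp_zero Q a) (fun i => ?_)
      exact ih i.1 (by have := i.isLt; omega) ⟨i.1, i.isLt.trans j.isLt⟩ rfl
  exact key j j rfl

theorem resp_cons {N k t : ℕ} (Q : QueryMaps N k (t + 1)) (a : Fin N → ℝ) :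
    Q.resp a = Fin.cons (α := fun _ => Fin k → ℝ) (firstQ Q *ᵥ a)
      ((peel Q (firstQ Q *ᵥ a)).resp a) := by
  funext j
  revert j
  exact Fin.cases (by rw [resp_zero]; rfl) (fun j => by rw [resp_succ]; rfl)

/-- Log-likelihood ratio, at the transcript `h`, of the input `G + x` against the input `G`,
where `G` is standard Gaussian. -/
def logLik {N k t : ℕ} (Q : QueryMaps N k t) (x : Fin N → ℝ) (h : Fin t → Fin k → ℝ) : ℝ :=
  ∑ j, ((Q j (hist h j) *ᵥ x) ⬝ᵥ h j - sqNorm (Q j (hist h j) *ᵥ x) / 2)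

theorem logLik_cons {N k t : ℕ} (Q : QueryMaps N k (t + 1)) (x : Fin N → ℝ) (r : Fin k → ℝ)
    (h : Fin t → Fin k → ℝ) :
    logLik Q x (Fin.cons (α := fun _ => Fin k → ℝ) r h)
      = ((firstQ Q *ᵥ x) ⬝ᵥ r - sqNorm (firstQ Q *ᵥ x) / 2) + logLik (peel Q r) x h := by
  unfold logLik
  have e := Q_zero Q (hist (Fin.cons (α := fun _ => Fin k → ℝ) r h) 0)
  rw [Fin.sum_univ_succ, ← e]
  congr 1
  refine Finset.sum_congr rfl fun j _ => ?_
  rw [hist_cons]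
  rfl

theorem measurable_query {N k t : ℕ} (Q : QueryMaps N k t) (hQ : Q.Valid) (x : Fin N → ℝ)
    (j : Fin t) : Measurable fun h : Fin t → Fin k → ℝ => Q j (hist h j) *ᵥ x := by
  refine measurable_pi_lambda _ fun i => ?_
  simp only [mulVec, dotProduct]
  refine Finset.measurable_sum _ fun l _ => ?_
  refine Measurable.mul_const ?_ _
  refine (hQ.1 j i l).comp (measurable_pi_lambda _ fun i => measurable_pi_apply _)

theorem measurable_sqNorm {ι : Type*} [Fintype ι] : Measurable (sqNorm : (ι → ℝ) → ℝ) := by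
  unfold sqNorm
  fun_prop

theorem measurable_logLik {N k t : ℕ} (Q : QueryMaps N k t) (hQ : Q.Valid) (x : Fin N → ℝ) :
    Measurable (logLik Q x) := by
  unfold logLik
  refine Finset.measurable_sum _ fun j _ => Measurable.sub ?_ ?_
  · simp only [dotProduct]
    refine Finset.measurable_sum _ fun i _ => Measurable.mul ?_ ?_
    · exact (measurable_pi_apply i).comp (measurable_query Q hQ x j)
    · fun_prop
  · exact (measurable_sqNorm.comp (measurable_query Q hQ x j)).div_const 2

/-- Law of the transcript of `t` rounds of `k` independent standard Gaussians. -/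
def gamT (k t : ℕ) : Measure (Fin t → Fin k → ℝ) := Measure.pi fun _ => gam (Fin k)

instance gamT_prob (k t : ℕ) : IsProbabilityMeasure (gamT k t) := by
  unfold gamT; infer_instance

theorem lintegral_gamT_succ {k t : ℕ} (f : (Fin (t + 1) → Fin k → ℝ) → ℝ≥0∞)
    (hf : Measurable f) :
    ∫⁻ h, f h ∂gamT k (t + 1)
      = ∫⁻ r, ∫⁻ h, f (Fin.cons (α := fun _ => Fin k → ℝ) r h) ∂gamT k t ∂gam (Fin k) := by
  have hp := measurePreserving_piFinSuccAbove
    (fun _ : Fin (t + 1) => gam (Fin k)) 0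
  have := hp.symm.lintegral_comp hf
  unfold gamT
  rw [← this, lintegral_prod]
  · refine lintegral_congr fun r => lintegral_congr fun h => congrArg f ?_
    funext j
    revert j
    exact Fin.cases rfl (fun l => rfl)
  · exact (hf.comp hp.symm.measurable).aemeasurable

/-- Change of measure for adaptive transcripts: the transcript on a shifted Gaussian input has
density `exp (logLik Q x)` with respect to independent standard Gaussian responses. -/
theorem girsanov {N k : ℕ} (x : Fin N → ℝ) : ∀ (t : ℕ) (Q : QueryMaps N k t), Q.Valid →
    ∀ f : (Fin t → Fin k → ℝ) → ℝ≥0∞, Measurable f →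
    ∫⁻ G, f (Q.resp (G + x)) ∂gam (Fin N)
      = ∫⁻ h, ENNReal.ofReal (Real.exp (logLik Q x h)) * f h ∂gamT k t := by
  intro t
  induction t with
  | zero =>
    intro Q hQ f hf
    have h1 : ∀ h : Fin 0 → Fin k → ℝ, h = fun i => i.elim0 := fun h => Subsingleton.elim _ _
    simp only [h1 (Q.resp _), logLik, Finset.univ_eq_empty, Finset.sum_empty, Real.exp_zero,
      ENNReal.ofReal_one, one_mul]
    rw [lintegral_const, measure_univ, mul_one]
    rw [lintegral_congr (fun h => congrArg f (h1 h)), lintegral_const, measure_univ, mul_one]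
  | succ t ih =>
    intro Q hQ f hf
    set Q0 := firstQ Q with hQ0
    have hQQ : Q0 * Q0ᵀ = 1 := hQ.2.1 _ _
    set P : Matrix (Fin N) (Fin N) ℝ := 1 - Q0ᵀ * Q0 with hP
    have hdec : Q0ᵀ * Q0ᵀᵀ + P * Pᵀ = 1 := by
      have h2 : Q0ᵀ * Q0 * (Q0ᵀ * Q0) = Q0ᵀ * Q0 := by
        rw [Matrix.mul_assoc, ← Matrix.mul_assoc Q0, hQQ, Matrix.one_mul]
      rw [hP]
      simp only [transpose_transpose, transpose_sub, transpose_one, transpose_mul, Matrix.sub_mul,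
        Matrix.mul_sub, Matrix.one_mul, Matrix.mul_one, h2]
      abel
    have hmeasQ : Measurable fun p : (Fin k → ℝ) × (Fin N → ℝ) =>
        (peel Q p.1).resp p.2 := by
      refine measurable_resp (fun r => peel Q r) fun j i l => ?_
      exact (hQ.1 j.succ i l).comp measurable_cons
    set F : (Fin k → ℝ) × (Fin N → ℝ) → ℝ≥0∞ := fun p =>
      f (Fin.cons (α := fun _ => Fin k → ℝ) p.1 ((peel Q p.1).resp (p.2 + x))) with hF
    have hFm : Measurable F := by
      refine hf.comp (measurable_cons.comp (measurable_fst.prodMk (hmeasQ.comp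
        (measurable_fst.prodMk (measurable_snd.add_const x)))))
    set Φ : (Fin k → ℝ) → ℝ≥0∞ := fun r => ∫⁻ G, F (r, G) ∂gam (Fin N) with hΦ
    have hΦm : Measurable Φ := hFm.lintegral_prod_right'
    have hrm := measurable_resp_det Q hQ
    have step1 : ∫⁻ G, f (Q.resp (G + x)) ∂gam (Fin N)
        = ∫⁻ g, Φ (g + Q0 *ᵥ x) ∂gam (Fin k) := by
      have hfm : Measurable fun G => f (Q.resp (G + x)) :=
        hf.comp (hrm.comp (measurable_id.add_const x))
      have hmv : ∀ {a b : ℕ} (M : Matrix (Fin a) (Fin b) ℝ),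
          Measurable fun v : Fin b → ℝ => M *ᵥ v := fun M => by
        refine measurable_pi_lambda _ fun i => ?_
        simp only [mulVec, dotProduct]
        fun_prop
      have hlin : Measurable fun p : (Fin k → ℝ) × (Fin N → ℝ) => Q0ᵀ *ᵥ p.1 + P *ᵥ p.2 :=
        ((hmv _).comp measurable_fst).add ((hmv _).comp measurable_snd)
      rw [← map_gam_prod Q0ᵀ P hdec, lintegral_map hfm hlin]
      rw [lintegral_prod]
      · refine lintegral_congr fun g => lintegral_congr fun G => ?_
        have e1 : Q0 *ᵥ (Q0ᵀ *ᵥ g + P *ᵥ G + x) = g + Q0 *ᵥ x := by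
          have : Q0 * P = 0 := by
            rw [hP, Matrix.mul_sub, ← Matrix.mul_assoc, hQQ]; simp
          simp only [mulVec_add, mulVec_mulVec, hQQ, this, one_mulVec, zero_mulVec, add_zero]
        have e2 : (peel Q (g + Q0 *ᵥ x)).resp (Q0ᵀ *ᵥ g + P *ᵥ G + x)
            = (peel Q (g + Q0 *ᵥ x)).resp (G + x) := by
          refine resp_congr _ _ _ fun j h => ?_
          have h3 := peel_orth Q hQ (g + Q0 *ᵥ x) j h
          rw [← hQ0] at h3
          have h4 : peel Q (g + Q0 *ᵥ x) j h * P = peel Q (g + Q0 *ᵥ x) j h := by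
            rw [hP, Matrix.mul_sub, ← Matrix.mul_assoc, h3]; simp
          simp only [mulVec_add, mulVec_mulVec, h3, h4, zero_mulVec, zero_add]
        simp only [hF]
        rw [resp_cons, ← hQ0, e1, e2]
      · exact (hfm.comp hlin).aemeasurable
    rw [step1, cameron_martin _ _ hΦm, lintegral_gamT_succ]
    · refine lintegral_congr fun r => ?_
      have e3 : Φ r = _ := ih (peel Q r) (peel_valid Q hQ r)
        (fun h => f (Fin.cons (α := fun _ => Fin k → ℝ) r h))
        (hf.comp (measurable_cons.comp (measurable_const.prodMk measurable_id)))
      rw [e3, ← lintegral_const_mul]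
      · refine lintegral_congr fun h => ?_
        rw [logLik_cons, ← hQ0, Real.exp_add, ENNReal.ofReal_mul (Real.exp_pos _).le, mul_assoc]
      · have h5 := measurable_logLik (peel Q r) (peel_valid Q hQ r) x
        exact (ENNReal.measurable_ofReal.comp (Real.measurable_exp.comp h5)).mul
          (hf.comp (measurable_cons.comp (measurable_const.prodMk measurable_id)))
    · have h5 := measurable_logLik Q hQ x
      exact (ENNReal.measurable_ofReal.comp (Real.measurable_exp.comp h5)).mul hf

/-- Contiguity: if the planted signal `x` is seen with total energy at most `B` along all
transcripts in `F`, then `F` is not much likelier under the planted input than under pure noise. -/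
theorem change_measure {N k t : ℕ} (Q : QueryMaps N k t) (hQ : Q.Valid) (x : Fin N → ℝ)
    (F : Set (Fin t → Fin k → ℝ)) (hF : MeasurableSet F) (B M : ℝ) (hM : 0 < M)
    (hB : ∀ h ∈ F, ∑ j, sqNorm (Q j (hist h j) *ᵥ x) ≤ B) :
    gam (Fin N) {G | Q.resp (G + x) ∈ F}
      ≤ ENNReal.ofReal M * gamT k t F + ENNReal.ofReal (Real.exp B / M) := by
  have hrm := measurable_resp_det Q hQ
  have hms : MeasurableSet {G | Q.resp (G + x) ∈ F} :=
    (hrm.comp (measurable_id.add_const x)) hF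
  have h1 := girsanov x t Q hQ (F.indicator 1) (measurable_one.indicator hF)
  have h2 : ∫⁻ G, F.indicator 1 (Q.resp (G + x)) ∂gam (Fin N)
      = gam (Fin N) {G | Q.resp (G + x) ∈ F} := by
    rw [← lintegral_indicator_one hms]
    rfl
  have h3 := girsanov ((2 : ℝ) • x) t Q hQ 1 measurable_one
  simp only [Pi.one_apply, mul_one, lintegral_const, measure_univ] at h3
  rw [← h2, h1]
  have hL : Measurable fun h => ENNReal.ofReal (Real.exp (logLik Q ((2 : ℝ) • x) h)) :=
    ENNReal.measurable_ofReal.comp (Real.measurable_exp.comp (measurable_logLik Q hQ _))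
  calc ∫⁻ h, ENNReal.ofReal (Real.exp (logLik Q x h)) * F.indicator 1 h ∂gamT k t
      ≤ ∫⁻ h, (ENNReal.ofReal M * F.indicator 1 h + ENNReal.ofReal (Real.exp B / M) *
          ENNReal.ofReal (Real.exp (logLik Q ((2 : ℝ) • x) h))) ∂gamT k t := by
        refine lintegral_mono fun h => ?_
        by_cases hh : h ∈ F
        · simp only [Set.indicator_of_mem hh, Pi.one_apply, mul_one]
          rw [← ENNReal.ofReal_mul (by positivity), ← ENNReal.ofReal_add hM.le (by positivity)]
          refine ENNReal.ofReal_le_ofReal ?_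
          have hlog : logLik Q ((2 : ℝ) • x) h
              = 2 * logLik Q x h - ∑ j, sqNorm (Q j (hist h j) *ᵥ x) := by
            unfold logLik
            rw [Finset.mul_sum, ← Finset.sum_sub_distrib]
            refine Finset.sum_congr rfl fun j _ => ?_
            rw [mulVec_smul, sqNorm_smul, smul_dotProduct, smul_eq_mul]
            ring
          have h4 : Real.exp (2 * logLik Q x h) ≤
              Real.exp B * Real.exp (logLik Q ((2 : ℝ) • x) h) := by
            rw [← Real.exp_add]
            refine Real.exp_le_exp.2 ?_
            have := hB h hh
            linarith
          have h5 : Real.exp (2 * logLik Q x h) = Real.exp (logLik Q x h) ^ 2 := by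
            rw [two_mul, Real.exp_add, sq]
          rw [h5] at h4
          set e := Real.exp (logLik Q x h)
          have h6 : e ≤ M + e ^ 2 / M := by
            rw [← sub_nonneg]
            have : M + e ^ 2 / M - e = ((M - e / 2) ^ 2 + 3 / 4 * e ^ 2) / M := by
              field_simp; ring
            rw [this]; positivity
          calc e ≤ M + e ^ 2 / M := h6
            _ ≤ M + (Real.exp B * Real.exp (logLik Q ((2 : ℝ) • x) h)) / M := by gcongr
            _ = _ := by ring
        · simp [Set.indicator_of_notMem hh]
    _ = _ := by
        rw [lintegral_add_left ((measurable_one.indicator hF).const_mul _),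
          lintegral_const_mul _ (measurable_one.indicator hF),
          lintegral_indicator_one hF, lintegral_const_mul _ hL, ← h3, mul_one]

/-! ### Operator norm of a Gaussian matrix -/

/-- The `n × n` matrix with a given flattening. -/
def mat {n : ℕ} (G : Fin (n * n) → ℝ) : Matrix (Fin n) (Fin n) ℝ :=
  Matrix.of fun i j => G (finProdFinEquiv (i, j))

theorem vec_mat {n : ℕ} (G : Fin (n * n) → ℝ) : _root_.vec n (mat G) = G := by
  funext i
  simp only [_root_.vec, mat, of_apply, Prod.mk.eta, Equiv.apply_symm_apply]

theorem mat_tensor {n : ℕ} (u v : Fin n → ℝ) : mat (tensor u v) = vecMulVec u v := by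
  ext i j
  simp [mat, tensor, _root_.vec, vecMulVec_apply]

theorem mat_add {n : ℕ} (G x : Fin (n * n) → ℝ) : mat (G + x) = mat G + mat x := by
  ext i j; simp [mat]

theorem mat_smul {n : ℕ} (c : ℝ) (x : Fin (n * n) → ℝ) : mat (c • x) = c • mat x := by
  ext i j; simp [mat]

theorem dot_mat {n : ℕ} (G : Fin (n * n) → ℝ) (z x : Fin n → ℝ) :
    z ⬝ᵥ (mat G *ᵥ x) = tensor z x ⬝ᵥ G := by
  rw [dotProduct_comm (tensor z x), dot_tensor]
  simp only [dotProduct, mulVec, mat, of_apply, Finset.mul_sum]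
  refine Finset.sum_congr rfl fun i _ => Finset.sum_congr rfl fun j _ => ?_
  ring

theorem continuous_sqNorm {ι : Type*} [Fintype ι] : Continuous (sqNorm : (ι → ℝ) → ℝ) := by
  unfold sqNorm
  fun_prop

theorem sqNorm_add_le {ι : Type*} [Fintype ι] (a b : ι → ℝ) (θ : ℝ) (hθ : 0 < θ) :
    sqNorm (a + b) ≤ (1 + θ) * sqNorm a + (1 + 1 / θ) * sqNorm b := by
  unfold sqNorm
  rw [Finset.mul_sum, Finset.mul_sum, ← Finset.sum_add_distrib]
  refine Finset.sum_le_sum fun i _ => ?_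
  rw [← sub_nonneg]
  have : (1 + θ) * a i ^ 2 + (1 + 1 / θ) * b i ^ 2 - (a + b) i ^ 2
      = (θ * a i - b i) ^ 2 / θ := by
    simp only [Pi.add_apply]; field_simp; ring
  rw [this]; positivity

theorem sqNorm_eq_zero {ι : Type*} [Fintype ι] {x : ι → ℝ} (h : sqNorm x = 0) : x = 0 := by
  unfold sqNorm at h
  rw [Finset.sum_eq_zero_iff_of_nonneg fun i _ => sq_nonneg _] at h
  funext i
  exact pow_eq_zero_iff (two_ne_zero) |>.1 (h i (Finset.mem_univ i))

/-- The Gaussian exponential moment of `‖G x‖²` at a fixed vector `x`. -/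
theorem lintegral_exp_mat {n : ℕ} (x : Fin n → ℝ) (hx : sqNorm x ≤ 9 / 4) :
    ∫⁻ G, ENNReal.ofReal (Real.exp (1 / 9 * sqNorm (mat G *ᵥ x))) ∂gam (Fin (n * n))
      ≤ ENNReal.ofReal (Real.exp ((n : ℝ) / 2)) := by
  set c : ℝ := Real.sqrt (2 / 9) with hc
  have hc2 : c ^ 2 = 2 / 9 := Real.sq_sqrt (by norm_num)
  have h1 : ∀ G : Fin (n * n) → ℝ,
      ENNReal.ofReal (Real.exp (1 / 9 * sqNorm (mat G *ᵥ x)))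
        = ∫⁻ z, ENNReal.ofReal (Real.exp (c * (z ⬝ᵥ (mat G *ᵥ x)))) ∂gam (Fin n) := by
    intro G
    have := lintegral_exp_dot_gam (c • (mat G *ᵥ x))
    rw [sqNorm_smul, hc2] at this
    rw [show 1 / 9 * sqNorm (mat G *ᵥ x) = 2 / 9 * sqNorm (mat G *ᵥ x) / 2 by ring, ← this]
    refine lintegral_congr fun z => ?_
    rw [smul_dotProduct, smul_eq_mul, dotProduct_comm z]
  have hcont : Continuous fun p : (Fin (n * n) → ℝ) × (Fin n → ℝ) =>
      Real.exp (c * (p.2 ⬝ᵥ (mat p.1 *ᵥ x))) := by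
    simp only [dotProduct, mulVec, mat, of_apply]
    fun_prop
  have hm : Measurable (Function.uncurry fun (G : Fin (n * n) → ℝ) (z : Fin n → ℝ) =>
      ENNReal.ofReal (Real.exp (c * (z ⬝ᵥ (mat G *ᵥ x))))) :=
    ENNReal.measurable_ofReal.comp hcont.measurable
  rw [lintegral_congr h1, lintegral_lintegral_swap hm.aemeasurable]
  have h2 : ∀ z : Fin n → ℝ,
      ∫⁻ G, ENNReal.ofReal (Real.exp (c * (z ⬝ᵥ (mat G *ᵥ x)))) ∂gam (Fin (n * n))
        = ENNReal.ofReal (Real.exp (∑ i, (sqNorm x / 9) * z i ^ 2)) := by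
    intro z
    have := lintegral_exp_dot_gam (c • tensor z x)
    rw [sqNorm_smul, hc2, sqNorm_tensor] at this
    rw [← Finset.mul_sum, show sqNorm x / 9 * ∑ i, z i ^ 2
      = 2 / 9 * (sqNorm z * sqNorm x) / 2 by unfold sqNorm; ring, ← this]
    refine lintegral_congr fun G => ?_
    rw [smul_dotProduct, smul_eq_mul, dot_mat]
  rw [lintegral_congr h2]
  have h0 := sqNorm_nonneg x
  refine (lintegral_exp_sum_sq_gam (fun _ => sqNorm x / 9) (fun _ => by positivity)
    (fun _ => by linarith)).trans ?_
  refine ENNReal.ofReal_le_ofReal (Real.exp_le_exp.2 ?_)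
  simp only [Finset.sum_const, Finset.card_univ, Fintype.card_fin, nsmul_eq_mul]
  have : (0 : ℝ) ≤ n := Nat.cast_nonneg n
  nlinarith

theorem isBounded_sqNorm {n : ℕ} (ρ : ℝ) :
    Bornology.IsBounded {x : Fin n → ℝ | sqNorm x ≤ ρ} := by
  refine (Metric.isBounded_closedBall (x := (0 : Fin n → ℝ)) (r := 1 + ρ)).subset fun x hx => ?_
  have h0 : 0 ≤ ρ := (sqNorm_nonneg x).trans hx
  rw [mem_closedBall_zero_iff, pi_norm_le_iff_of_nonneg (by linarith)]
  intro i
  have h1 : x i ^ 2 ≤ ρ :=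
    (Finset.single_le_sum (f := fun i => x i ^ 2) (fun i _ => sq_nonneg _)
      (Finset.mem_univ i)).trans hx
  rw [Real.norm_eq_abs]
  have := sq_abs (x i)
  nlinarith [abs_nonneg (x i)]

theorem mulVec_sqNorm_continuous {n : ℕ} (A : Matrix (Fin n) (Fin n) ℝ) :
    Continuous fun x : Fin n → ℝ => sqNorm (A *ᵥ x) := by
  refine continuous_sqNorm.comp ?_
  fun_prop

/-- A unit vector at which the operator norm is attained. -/
theorem exists_top {n : ℕ} (A : Matrix (Fin n) (Fin n) ℝ) :
    ∃ x₀ : Fin n → ℝ, sqNorm x₀ ≤ 1 ∧ ∀ y, sqNorm (A *ᵥ y) ≤ sqNorm (A *ᵥ x₀) * sqNorm y := by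
  have hK : IsCompact {x : Fin n → ℝ | sqNorm x ≤ 1} :=
    Metric.isCompact_of_isClosed_isBounded (isClosed_le continuous_sqNorm continuous_const)
      (isBounded_sqNorm 1)
  obtain ⟨x₀, hx₀, hmax⟩ := hK.exists_isMaxOn ⟨0, by simp [sqNorm]⟩
    (mulVec_sqNorm_continuous A).continuousOn
  refine ⟨x₀, hx₀, fun y => ?_⟩
  rcases (sqNorm_nonneg y).eq_or_lt with h | h
  · rw [sqNorm_eq_zero h.symm]; simp [sqNorm]
  · have h1 : sqNorm (A *ᵥ ((Real.sqrt (sqNorm y))⁻¹ • y)) ≤ sqNorm (A *ᵥ x₀) := by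
      refine hmax ?_
      simp only [Set.mem_ofPred_eq, sqNorm_smul, inv_pow, Real.sq_sqrt h.le]
      rw [inv_mul_cancel₀ h.ne']
    rw [mulVec_smul, sqNorm_smul, inv_pow, Real.sq_sqrt h.le, inv_mul_le_iff₀ h] at h1
    linarith

open scoped Pointwise in
/-- A Gaussian matrix has operator norm at most `12 √n`, outside an exponentially small event.
The event is a superlevel set of the integral of `exp (‖G x‖² / 9)` over a ball. -/
theorem bad_event (n : ℕ) : ∃ Bad : Set (Fin (n * n) → ℝ), MeasurableSet Bad ∧
    gam (Fin (n * n)) Bad ≤ ENNReal.ofReal (Real.exp (-2 * n)) ∧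
    ∀ G, G ∉ Bad → ∀ x, sqNorm (mat G *ᵥ x) ≤ 144 * n * sqNorm x := by
  set S : Set (Fin n → ℝ) := {x | sqNorm x < 1 / 4} with hS
  set S3 : Set (Fin n → ℝ) := {x | sqNorm x < 9 / 4} with hS3
  have hSo : IsOpen S := isOpen_lt continuous_sqNorm continuous_const
  have hS3o : IsOpen S3 := isOpen_lt continuous_sqNorm continuous_const
  have hSpos : volume S ≠ 0 := (hSo.measure_pos volume ⟨0, by simp [hS, sqNorm]⟩).ne'
  have hSb : Bornology.IsBounded S :=
    (isBounded_sqNorm (n := n) (1 / 4)).subset fun x hx => by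
      simp only [hS, Set.mem_ofPred_eq] at hx ⊢
      exact hx.le
  have hSfin : volume S ≠ ⊤ := hSb.measure_lt_top.ne
  have hvol : volume S3 = ENNReal.ofReal (3 ^ n) * volume S := by
    have h1 : S3 = (3 : ℝ) • S := by
      ext x
      rw [Set.mem_smul_set_iff_inv_smul_mem₀ (by norm_num)]
      simp only [hS, hS3, Set.mem_ofPred_eq, sqNorm_smul]
      constructor <;> intro h <;> nlinarith
    rw [h1, Measure.addHaar_smul]
    simp
  set Ψ : (Fin (n * n) → ℝ) → ℝ≥0∞ := fun G =>
    ∫⁻ x in S3, ENNReal.ofReal (Real.exp (1 / 9 * sqNorm (mat G *ᵥ x))) with hΨ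
  have hjm : Measurable fun p : (Fin (n * n) → ℝ) × (Fin n → ℝ) =>
      ENNReal.ofReal (Real.exp (1 / 9 * sqNorm (mat p.1 *ᵥ p.2))) := by
    refine ENNReal.measurable_ofReal.comp (Continuous.measurable ?_)
    simp only [sqNorm, mulVec, dotProduct, mat, of_apply]
    fun_prop
  have hΨm : Measurable Ψ := hjm.lintegral_prod_right'
  set C : ℝ≥0∞ := ENNReal.ofReal (Real.exp (4 * n)) * volume S with hC
  have hC0 : C ≠ 0 := mul_ne_zero (by simp [Real.exp_pos]) hSpos
  have hCt : C ≠ ⊤ := ENNReal.mul_ne_top ENNReal.ofReal_ne_top hSfin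
  refine ⟨{G | C ≤ Ψ G}, measurableSet_le measurable_const hΨm, ?_, ?_⟩
  · have hE : ∫⁻ G, Ψ G ∂gam (Fin (n * n)) ≤ ENNReal.ofReal (Real.exp (-2 * n)) * C := by
      rw [hΨ, lintegral_lintegral_swap hjm.aemeasurable]
      calc ∫⁻ x in S3, ∫⁻ G, ENNReal.ofReal (Real.exp (1 / 9 * sqNorm (mat G *ᵥ x)))
              ∂gam (Fin (n * n))
          ≤ ∫⁻ x in S3, ENNReal.ofReal (Real.exp ((n : ℝ) / 2)) :=
            setLIntegral_mono measurable_const fun x hx => lintegral_exp_mat x (le_of_lt hx)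
        _ = ENNReal.ofReal (Real.exp ((n : ℝ) / 2) * 3 ^ n) * volume S := by
            rw [setLIntegral_const, hvol, ← mul_assoc, ← ENNReal.ofReal_mul (Real.exp_pos _).le]
        _ ≤ ENNReal.ofReal (Real.exp (-2 * n) * Real.exp (4 * n)) * volume S := by
            refine mul_le_mul' (ENNReal.ofReal_le_ofReal ?_) le_rfl
            have h3 : (3 : ℝ) ≤ Real.exp (3 / 2) := by
              have h4 : Real.exp (3 / 2) = Real.exp 1 * Real.exp (1 / 2) := by
                rw [← Real.exp_add]; norm_num
              have h5 := Real.exp_one_gt_d9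
              have h6 := Real.add_one_le_exp (1 / 2 : ℝ)
              rw [h4]; nlinarith
            calc Real.exp ((n : ℝ) / 2) * 3 ^ n
                ≤ Real.exp ((n : ℝ) / 2) * Real.exp (3 / 2) ^ n := by gcongr
              _ = Real.exp (-2 * n) * Real.exp (4 * n) := by
                rw [← Real.exp_nat_mul, ← Real.exp_add, ← Real.exp_add]; ring_nf
        _ = _ := by
            rw [hC, ← mul_assoc, ENNReal.ofReal_mul (Real.exp_pos _).le]
    have hM := mul_meas_ge_le_lintegral (μ := gam (Fin (n * n))) hΨm C
    rw [mul_comm (ENNReal.ofReal _) C] at hE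
    exact (ENNReal.mul_le_mul_iff_right hC0 hCt).1 (hM.trans hE)
  · intro G hG x
    by_contra hx
    push Not at hx
    refine hG ?_
    obtain ⟨x₀, hx₀, htop⟩ := exists_top (mat G)
    set m := sqNorm (mat G *ᵥ x₀) with hm
    have hm0 : 0 ≤ m := sqNorm_nonneg _
    have hm1 : 144 * n ≤ m := by
      by_contra h
      push Not at h
      have := htop x
      nlinarith [sqNorm_nonneg x]
    have hsub : (fun x => x₀ + x) '' S ⊆ S3 := by
      rintro _ ⟨d, hd, rfl⟩
      have h1 := sqNorm_add_le x₀ d (1 / 2) (by norm_num)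
      simp only [hS, hS3, Set.mem_ofPred_eq] at hd ⊢
      linarith
    have hvS : volume ((fun x => x₀ + x) '' S) = volume S := by
      rw [Set.image_add_left]
      exact measure_preimage_add volume (-x₀) S
    show C ≤ Ψ G
    calc C = ∫⁻ x in (fun x => x₀ + x) '' S, ENNReal.ofReal (Real.exp (4 * n)) := by
          rw [setLIntegral_const, hvS]
      _ ≤ ∫⁻ x in (fun x => x₀ + x) '' S,
            ENNReal.ofReal (Real.exp (1 / 9 * sqNorm (mat G *ᵥ x))) := by
          have hgm : Measurable fun x : Fin n → ℝ =>
              ENNReal.ofReal (Real.exp (1 / 9 * sqNorm (mat G *ᵥ x))) :=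
            ENNReal.measurable_ofReal.comp (Real.measurable_exp.comp
              ((mulVec_sqNorm_continuous (mat G)).measurable.const_mul _))
          refine setLIntegral_mono hgm ?_
          rintro _ ⟨d, hd, rfl⟩
          refine ENNReal.ofReal_le_ofReal (Real.exp_le_exp.2 ?_)
          have h1 := sqNorm_add_le (mat G *ᵥ (x₀ + d)) (mat G *ᵥ (-d)) 1 one_pos
          rw [← mulVec_add, add_neg_cancel_right, ← hm] at h1
          have h2 := htop (-d)
          have h3 : sqNorm (-d) = sqNorm d := by simp [sqNorm]
          simp only [hS, Set.mem_ofPred_eq] at hd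
          rw [h3] at h2
          nlinarith
      _ ≤ Ψ G := lintegral_mono_set hsub

/-! ### Deterministic algorithms on planted inputs -/

/-- The first `j` rounds of an algorithm. -/
def trunc {N k t : ℕ} (Q : QueryMaps N k t) (j : ℕ) (hj : j ≤ t) : QueryMaps N k j :=
  fun i h => Q ⟨i.1, i.isLt.trans_le hj⟩ h

theorem trunc_valid {N k t : ℕ} (Q : QueryMaps N k t) (hQ : Q.Valid) (j : ℕ) (hj : j ≤ t) :
    (trunc Q j hj).Valid :=
  ⟨fun i a l => hQ.1 ⟨i.1, i.isLt.trans_le hj⟩ a l,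
    fun i h => hQ.2.1 ⟨i.1, i.isLt.trans_le hj⟩ h,
    fun i' i hi h => hQ.2.2 ⟨i'.1, i'.isLt.trans_le hj⟩ ⟨i.1, i.isLt.trans_le hj⟩ hi h⟩

theorem trunc_resp {N k t : ℕ} (Q : QueryMaps N k t) (j : ℕ) (hj : j ≤ t) (a : Fin N → ℝ)
    (i : Fin j) : (trunc Q j hj).resp a i = Q.resp a ⟨i.1, i.isLt.trans_le hj⟩ := by
  have key : ∀ m : ℕ, ∀ i : Fin j, (i : ℕ) = m →
      (trunc Q j hj).resp a i = Q.resp a ⟨i.1, i.isLt.trans_le hj⟩ := by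
    intro m
    induction m using Nat.strong_induction_on with
    | _ m ih =>
      intro i hi
      rw [resp_eq, resp_eq]
      unfold trunc
      congr 2
      funext l
      exact ih l.1 (by have := l.isLt; omega) ⟨l.1, l.isLt.trans i.isLt⟩ rfl
  exact key i i rfl

/-- Averaging the change of measure over the signs: if, for each transcript `h`, at most a
fraction `p` of the sign pairs have `h ∈ F v u`, then the events that the transcript lies in `F v u` under the
planted inputs are rare on average. -/
theorem avg_bound {n k t : ℕ} (Q : QueryMaps (n * n) k t) (hQ : Q.Valid) (s : ℝ)
    (F : (Fin n → Bool) → (Fin n → Bool) → Set (Fin t → Fin k → ℝ))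
    (hF : ∀ v u, MeasurableSet (F v u)) (B b p : ℝ) (hp : 0 ≤ p)
    (hB : ∀ v u, ∀ h ∈ F v u,
      s ^ 2 * ∑ j, sqNorm (Q j (hist h j) *ᵥ tensor (sgv u) (sgv v)) ≤ B)
    (hcount : ∀ h, ∑ v, ∑ u, (if h ∈ F v u then (1 : ℝ) else 0) ≤ 2 ^ n * 2 ^ n * p) :
    ∑ v, ∑ u, gam (Fin (n * n)) {G | Q.resp (G + s • tensor (sgv u) (sgv v)) ∈ F v u}
      ≤ ENNReal.ofReal (2 ^ n * 2 ^ n * (Real.exp (B + b) * p + Real.exp (-b))) := by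
  have h1 : ∀ v u, gam (Fin (n * n)) {G | Q.resp (G + s • tensor (sgv u) (sgv v)) ∈ F v u}
      ≤ ENNReal.ofReal (Real.exp (B + b)) * gamT k t (F v u) + ENNReal.ofReal (Real.exp (-b)) := by
    intro v u
    have := change_measure Q hQ (s • tensor (sgv u) (sgv v)) (F v u) (hF v u) B
      (Real.exp (B + b)) (Real.exp_pos _) (fun h hh => by
        have := hB v u h hh
        simp only [mulVec_smul, sqNorm_smul, ← Finset.mul_sum]
        exact this)
    rwa [← Real.exp_sub, show B - (B + b) = -b by ring] at this
  have h2 : ∑ v, ∑ u, gamT k t (F v u) ≤ ENNReal.ofReal (2 ^ n * 2 ^ n * p) := by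
    have h3 : ∑ v, ∑ u, gamT k t (F v u)
        = ∫⁻ h, ENNReal.ofReal (∑ v, ∑ u, (if h ∈ F v u then (1 : ℝ) else 0)) ∂gamT k t := by
      have h4 : ∀ h, ENNReal.ofReal (∑ v, ∑ u, (if h ∈ F v u then (1 : ℝ) else 0))
          = ∑ v, ∑ u, (F v u).indicator (fun _ => (1 : ℝ≥0∞)) h := by
        intro h
        rw [ENNReal.ofReal_sum_of_nonneg fun v _ => Finset.sum_nonneg fun u _ => by
          split_ifs <;> norm_num]
        refine Finset.sum_congr rfl fun v _ => ?_
        rw [ENNReal.ofReal_sum_of_nonneg fun u _ => by split_ifs <;> norm_num]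
        refine Finset.sum_congr rfl fun u _ => ?_
        by_cases hh : h ∈ F v u <;> simp [hh]
      rw [lintegral_congr h4, lintegral_finsetSum]
      · refine Finset.sum_congr rfl fun v _ => ?_
        rw [lintegral_finsetSum]
        · refine Finset.sum_congr rfl fun u _ => ?_
          rw [lintegral_indicator (hF v u), setLIntegral_const, one_mul]
        · exact fun u _ => measurable_const.indicator (hF v u)
      · exact fun v _ => Finset.measurable_sum _ fun u _ => measurable_const.indicator (hF v u)
    rw [h3]
    calc _ ≤ ∫⁻ _, ENNReal.ofReal (2 ^ n * 2 ^ n * p) ∂gamT k t :=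
          lintegral_mono fun h => ENNReal.ofReal_le_ofReal (hcount h)
      _ = _ := by simp
  calc _ ≤ ∑ v, ∑ u, (ENNReal.ofReal (Real.exp (B + b)) * gamT k t (F v u)
          + ENNReal.ofReal (Real.exp (-b))) :=
        Finset.sum_le_sum fun v _ => Finset.sum_le_sum fun u _ => h1 v u
    _ = ENNReal.ofReal (Real.exp (B + b)) * ∑ v, ∑ u, gamT k t (F v u)
          + ENNReal.ofReal (2 ^ n * 2 ^ n) * ENNReal.ofReal (Real.exp (-b)) := by
        simp only [Finset.sum_add_distrib, Finset.mul_sum, Finset.sum_const, Finset.card_univ,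
          Fintype.card_fun, Fintype.card_bool, Fintype.card_fin, nsmul_eq_mul, ← mul_assoc]
        congr 2
        rw [ENNReal.ofReal_mul (by positivity), ENNReal.ofReal_pow (by norm_num)]
        simp
    _ ≤ ENNReal.ofReal (Real.exp (B + b)) * ENNReal.ofReal (2 ^ n * 2 ^ n * p)
          + ENNReal.ofReal (2 ^ n * 2 ^ n) * ENNReal.ofReal (Real.exp (-b)) := by gcongr
    _ = _ := by
        rw [← ENNReal.ofReal_mul (Real.exp_pos _).le, ← ENNReal.ofReal_mul (by positivity),
          ← ENNReal.ofReal_add (by positivity) (by positivity)]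
        congr 1; ring

/-- Strength `s` of the plant `s • u vᵀ`. Since `‖u‖ = ‖v‖ = √n`, the plant has operator norm
`144 √n`, twelve times the bound `12 √n` used for the Gaussian noise. -/
def snr (n : ℕ) : ℝ := 144 / Real.sqrt n

/-- The bilinear consequence of a successful approximation `B` of the planted matrix,
tested on all pairs of sign vectors. -/
def Close {n : ℕ} (v u : Fin n → Bool) (B : Matrix (Fin n) (Fin n) ℝ) : Prop :=
  ∀ u' v' : Fin n → Bool,
    |snr n * ((sgv u' ⬝ᵥ sgv u) * (sgv v ⬝ᵥ sgv v')) - sgv u' ⬝ᵥ (B *ᵥ sgv v')|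
      ≤ 36 * Real.sqrt n * n

theorem dot_sgv_self {n : ℕ} (u : Fin n → Bool) : sgv u ⬝ᵥ sgv u = n := by
  rw [← sqNorm_eq_dot, sqNorm_sgv]

theorem abs_dot_sgv_le {n : ℕ} (u v : Fin n → Bool) : |sgv u ⬝ᵥ sgv v| ≤ n := by
  refine abs_le_of_sq_le_sq ?_ (Nat.cast_nonneg n)
  have := dot_sq_le (sgv u) (sgv v)
  rw [sqNorm_sgv, sqNorm_sgv] at this
  rw [sq (n : ℝ)]
  exact this

/-- A fixed matrix is close to the plant for an exponentially small fraction of the signs. -/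
theorem count_close {n : ℕ} (hn : 0 < n) (B : Matrix (Fin n) (Fin n) ℝ) :
    ∑ v, ∑ u, (if Close v u B then (1 : ℝ) else 0)
      ≤ 2 ^ n * 2 ^ n * (2 * Real.exp (-n / 8)) := by
  by_cases hex : ∃ v u, Close v u B
  · obtain ⟨v₀, u₀, h0⟩ := hex
    have hn' : (0 : ℝ) < n := by exact_mod_cast hn
    have hq : 0 < Real.sqrt n := Real.sqrt_pos.2 hn'
    have hqq : Real.sqrt n * Real.sqrt n = n := Real.mul_self_sqrt hn'.le
    have key : ∀ v u, Close v u B → (n : ℝ) / 2 ≤ |sgv u₀ ⬝ᵥ sgv u| := by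
      intro v u h1
      have a0 := (abs_le.1 (h0 u₀ v₀)).2
      have a1 := (abs_le.1 (h1 u₀ v₀)).1
      rw [dot_sgv_self, dot_sgv_self] at a0
      have a2 : snr n * (n * n - (sgv u₀ ⬝ᵥ sgv u) * (sgv v ⬝ᵥ sgv v₀))
          ≤ 72 * Real.sqrt n * n := by linarith
      have a3 : n * n - (sgv u₀ ⬝ᵥ sgv u) * (sgv v ⬝ᵥ sgv v₀) ≤ (n : ℝ) * n / 2 := by
        unfold snr at a2
        rw [div_mul_eq_mul_div, div_le_iff₀ hq] at a2
        have : 72 * Real.sqrt n * n * Real.sqrt n = 72 * (n * n) := by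
          calc _ = 72 * (Real.sqrt n * Real.sqrt n * n) := by ring
            _ = _ := by rw [hqq]
        linarith
      have a4 := abs_dot_sgv_le v v₀
      have a5 : (sgv u₀ ⬝ᵥ sgv u) * (sgv v ⬝ᵥ sgv v₀) ≤ |sgv u₀ ⬝ᵥ sgv u| * n := by
        refine (le_abs_self _).trans ?_
        rw [abs_mul]
        exact mul_le_mul_of_nonneg_left a4 (abs_nonneg _)
      have a6 : (n : ℝ) / 2 * n ≤ |sgv u₀ ⬝ᵥ sgv u| * n := by linarith
      exact le_of_mul_le_mul_right a6 hn'
    calc ∑ v, ∑ u, (if Close v u B then (1 : ℝ) else 0)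
        ≤ ∑ v : Fin n → Bool, ∑ u, (if (n : ℝ) / 2 ≤ |sgv u₀ ⬝ᵥ sgv u| then (1 : ℝ) else 0) := by
          refine Finset.sum_le_sum fun v _ => Finset.sum_le_sum fun u _ => ?_
          by_cases h : Close v u B
          · rw [if_pos h, if_pos (key v u h)]
          · rw [if_neg h]; split_ifs <;> norm_num
      _ ≤ ∑ v : Fin n → Bool, 2 ^ n * (2 * Real.exp (-n / 8)) :=
          Finset.sum_le_sum fun v _ => hoeffding_sgv u₀
      _ = _ := by simp; ring
  · have : ∀ v u, ¬ Close v u B := fun v u h => hex ⟨v, u, h⟩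
    simp only [this, if_false, Finset.sum_const_zero]
    positivity

theorem measurableSet_close {α : Type*} [MeasurableSpace α] {n : ℕ} (v u : Fin n → Bool)
    (f : α → Matrix (Fin n) (Fin n) ℝ) (hf : ∀ i j, Measurable fun a => f a i j) :
    MeasurableSet {a | Close v u (f a)} := by
  unfold Close
  simp only [Set.ofPred_forall]
  refine MeasurableSet.iInter fun u' => MeasurableSet.iInter fun v' => ?_
  refine measurableSet_le ?_ measurable_const
  refine (Measurable.sub measurable_const ?_).abs
  simp only [dotProduct, mulVec]
  exact Finset.measurable_sum _ fun i _ => (Finset.measurable_sum _ fun j _ =>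
    (hf i j).mul_const _).const_mul _

theorem geom_bound (j : ℕ) : 331776 * ∑ i : Fin j, (331777 : ℝ) ^ (i : ℕ) ≤ 331777 ^ j := by
  rw [Fin.sum_univ_eq_sum_range (fun i => (331777 : ℝ) ^ i)]
  induction j with
  | zero => simp
  | succ j ih => rw [Finset.sum_range_succ, mul_add, pow_succ]; linarith

/-- Energy of the plant seen in `j` rounds when round `i` sees at most `232 K ^ i k`. -/
theorem energy_bound {n k j : ℕ} (hn : 0 < n) (e : Fin j → ℝ)
    (he : ∀ i, e i ≤ 232 * 331777 ^ (i : ℕ) * k) :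
    snr n ^ 2 * ∑ i, e i ≤ 29 / 2 * (k / n) * 331777 ^ j := by
  have hn' : (0 : ℝ) < n := by exact_mod_cast hn
  have hs : snr n ^ 2 = 20736 / n := by
    unfold snr
    rw [div_pow, Real.sq_sqrt hn'.le]; norm_num
  have h1 : ∑ i, e i ≤ 232 * k * ∑ i : Fin j, (331777 : ℝ) ^ (i : ℕ) := by
    rw [Finset.mul_sum]
    refine Finset.sum_le_sum fun i _ => (he i).trans (le_of_eq (by ring))
  have h2 := geom_bound j
  have h3 : ∑ i, e i ≤ 232 * k * (331777 ^ j / 331776) := by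
    refine h1.trans ?_
    gcongr
    rw [le_div_iff₀ (by norm_num)]; linarith
  rw [hs]
  calc 20736 / (n : ℝ) * ∑ i, e i ≤ 20736 / n * (232 * k * (331777 ^ j / 331776)) := by gcongr
    _ = _ := by ring

theorem exp_neg_small (j : ℕ) :
    Real.exp (-7 * (331777 : ℝ) ^ j) ≤ 1 / 64 * (1 / 2) ^ j := by
  have h1 : (j : ℝ) + 1 ≤ 331777 ^ j := by
    have := one_add_mul_le_pow (a := (331776 : ℝ)) (by norm_num) j
    norm_num at this
    have hj : (0 : ℝ) ≤ j := Nat.cast_nonneg j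
    linarith
  have h2 : Real.exp (-7) ≤ 1 / 64 := by
    rw [Real.exp_neg, inv_le_comm₀ (Real.exp_pos _) (by norm_num)]
    have h3 : Real.exp 7 = Real.exp 1 ^ 7 := by rw [← Real.exp_nat_mul]; norm_num
    have h5 := Real.exp_one_gt_d9
    rw [h3]
    calc (1 / 64 : ℝ)⁻¹ ≤ 2 ^ 7 := by norm_num
      _ ≤ _ := by gcongr; linarith
  calc Real.exp (-7 * (331777 : ℝ) ^ j) ≤ Real.exp (-7 * ((j : ℝ) + 1)) := by
        refine Real.exp_le_exp.2 ?_; linarith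
    _ = Real.exp (-7) * Real.exp (-7) ^ j := by
        rw [← Real.exp_nat_mul, ← Real.exp_add]; ring_nf
    _ ≤ 1 / 64 * (1 / 2) ^ j := by
        have := (Real.exp_pos (-7)).le
        gcongr
        linarith

theorem sum_half_le (t : ℕ) : ∑ j : Fin t, (1 / 32 * (1 / 2 : ℝ) ^ (j : ℕ)) ≤ 1 / 16 := by
  rw [← Finset.mul_sum, Fin.sum_univ_eq_sum_range (fun i => (1 / 2 : ℝ) ^ i)]
  have : ∑ i ∈ Finset.range t, (1 / 2 : ℝ) ^ i = 2 - 2 * (1 / 2) ^ t := by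
    induction t with
    | zero => norm_num
    | succ t ih => rw [Finset.sum_range_succ, ih, pow_succ]; ring
  rw [this]
  have : (0 : ℝ) ≤ (1 / 2) ^ t := by positivity
  linarith

/-- Summed over the sign pairs, the probability that round `j` is the first one to capture more than
the energy allotted to it, `232 K ^ j k` with `K = 331777`. The constant `232` makes the exponents
balance: `T / (8 n)` with `T = 232 K ^ j k` is `29 K ^ j k / n`, which covers the energy
`29 / 2 * K ^ j k / n` seen before round `j`, the slack `7 K ^ j k / n` in the change of measure, the
mean term `k / (2 n)`, and leaves `7 K ^ j k / n` to spare. -/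
theorem escape_bound {n k t : ℕ} (hn : 0 < n) (hk : n ≤ k) (Q : QueryMaps (n * n) k t)
    (hQ : Q.Valid) (j : Fin t) :
    ∑ v, ∑ u, gam (Fin (n * n)) {G |
        (trunc Q j j.isLt.le).resp (G + snr n • tensor (sgv u) (sgv v)) ∈
          {h : Fin (j : ℕ) → Fin k → ℝ |
            (∀ i, sqNorm (trunc Q j j.isLt.le i (hist h i) *ᵥ tensor (sgv u) (sgv v))
              ≤ 232 * 331777 ^ (i : ℕ) * k) ∧
            232 * 331777 ^ (j : ℕ) * k < sqNorm (Q j h *ᵥ tensor (sgv u) (sgv v))}}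
      ≤ ENNReal.ofReal (2 ^ n * 2 ^ n * (1 / 32 * (1 / 2) ^ (j : ℕ))) := by
  have hn' : (0 : ℝ) < n := by exact_mod_cast hn
  have hkn : (1 : ℝ) ≤ k / n := by
    rw [le_div_iff₀ hn', one_mul]; exact_mod_cast hk
  have hK1 : (1 : ℝ) ≤ 331777 ^ (j : ℕ) := one_le_pow₀ (by norm_num)
  have hQj := trunc_valid Q hQ j j.isLt.le
  refine (avg_bound (trunc Q j j.isLt.le) hQj (snr n) _ ?_
    (29 / 2 * (k / n) * 331777 ^ (j : ℕ)) (7 * (k / n) * 331777 ^ (j : ℕ))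
    (Real.exp (k / (2 * n) - 232 * 331777 ^ (j : ℕ) * k / (8 * n)))
    (Real.exp_pos _).le ?_ ?_).trans ?_
  · intro v u
    refine MeasurableSet.inter (s₁ := {h : Fin (j : ℕ) → Fin k → ℝ | _})
      (s₂ := {h : Fin (j : ℕ) → Fin k → ℝ | _}) ?_ ?_
    · simp only [Set.ofPred_forall]
      refine MeasurableSet.iInter fun i => measurableSet_le ?_ measurable_const
      exact measurable_sqNorm.comp (measurable_query _ hQj _ i)
    · refine measurableSet_lt measurable_const (measurable_sqNorm.comp ?_)
      refine measurable_pi_lambda _ fun i => ?_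
      simp only [mulVec, dotProduct]
      exact Finset.measurable_sum _ fun l _ => (hQ.1 j i l).mul_const _
  · intro v u h hh
    exact energy_bound hn _ hh.1
  · intro h
    refine le_trans ?_ (chaos_tail hn (Q j h) (hQ.2.1 j h) (232 * 331777 ^ (j : ℕ) * k))
    refine Finset.sum_le_sum fun v _ => Finset.sum_le_sum fun u _ => ?_
    by_cases hT : 232 * 331777 ^ (j : ℕ) * k < sqNorm (Q j h *ᵥ tensor (sgv u) (sgv v))
    · rw [if_pos hT]; split_ifs <;> norm_num
    · rw [if_neg hT, if_neg fun hh => hT hh.2]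
  · refine ENNReal.ofReal_le_ofReal (mul_le_mul_of_nonneg_left ?_ (by positivity))
    have hX : (331777 : ℝ) ^ (j : ℕ) ≤ k / n * 331777 ^ (j : ℕ) :=
      le_mul_of_one_le_left (by positivity) hkn
    have hY : (k : ℝ) / n ≤ k / n * 331777 ^ (j : ℕ) :=
      le_mul_of_one_le_right (by positivity) hK1
    rw [← Real.exp_add]
    have e1 : Real.exp (29 / 2 * ((k : ℝ) / n) * 331777 ^ (j : ℕ) + 7 * (k / n) * 331777 ^ (j : ℕ)
        + (k / (2 * n) - 232 * 331777 ^ (j : ℕ) * k / (8 * n)))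
        ≤ Real.exp (-7 * (331777 : ℝ) ^ (j : ℕ)) := by
      refine Real.exp_le_exp.2 ?_
      have e2 : (k : ℝ) / (2 * n) = 1 / 2 * (k / n) := by field_simp
      have e3 : 232 * (331777 : ℝ) ^ (j : ℕ) * k / (8 * n) = 29 * (k / n * 331777 ^ (j : ℕ)) := by
        field_simp; ring
      rw [e2, e3]
      linarith
    have e4 : Real.exp (-(7 * ((k : ℝ) / n) * 331777 ^ (j : ℕ)))
        ≤ Real.exp (-7 * (331777 : ℝ) ^ (j : ℕ)) := by
      refine Real.exp_le_exp.2 ?_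
      linarith
    have e5 := exp_neg_small j
    linarith

/-- Summed over the sign pairs, the probability that no round captures more than its allotted
energy and yet the output is close to the plant. -/
theorem final_bound {n k t : ℕ} (hn : 200 ≤ n)
    (hK : 232 * (331777 : ℝ) ^ t * k ≤ (n : ℝ) ^ 2) (Q : QueryMaps (n * n) k t) (hQ : Q.Valid)
    (out : (Fin t → Fin k → ℝ) → Matrix (Fin n) (Fin n) ℝ)
    (hout : ∀ i j, Measurable fun h => out h i j) :
    ∑ v, ∑ u, gam (Fin (n * n)) {G |
        Q.resp (G + snr n • tensor (sgv u) (sgv v)) ∈ {h : Fin t → Fin k → ℝ |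
          (∀ i, sqNorm (Q i (hist h i) *ᵥ tensor (sgv u) (sgv v))
            ≤ 232 * 331777 ^ (i : ℕ) * k) ∧ Close v u (out h)}}
      ≤ ENNReal.ofReal (2 ^ n * 2 ^ n * (3 / 100)) := by
  have hn1 : 0 < n := by omega
  have hn' : (0 : ℝ) < n := by exact_mod_cast hn1
  have hn2 : (200 : ℝ) ≤ n := by exact_mod_cast hn
  have hB : 29 / 2 * ((k : ℝ) / n) * 331777 ^ t ≤ n / 16 := by
    have : 29 / 2 * ((k : ℝ) / n) * 331777 ^ t = 232 * (331777 : ℝ) ^ t * k / n / 16 := by ring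
    rw [this]
    gcongr
    rw [div_le_iff₀ hn', ← sq]
    exact hK
  refine (avg_bound Q hQ (snr n) _ ?_ (29 / 2 * (k / n) * 331777 ^ t) 5
    (2 * Real.exp (-n / 8)) (by positivity) ?_ ?_).trans ?_
  · intro v u
    refine MeasurableSet.inter (s₁ := {h : Fin t → Fin k → ℝ | _})
      (s₂ := {h : Fin t → Fin k → ℝ | _}) ?_ (measurableSet_close v u out hout)
    simp only [Set.ofPred_forall]
    refine MeasurableSet.iInter fun i => measurableSet_le ?_ measurable_const
    exact measurable_sqNorm.comp (measurable_query _ hQ _ i)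
  · intro v u h hh
    exact energy_bound hn1 _ hh.1
  · intro h
    refine le_trans ?_ (count_close hn1 (out h))
    refine Finset.sum_le_sum fun v _ => Finset.sum_le_sum fun u _ => ?_
    by_cases hT : Close v u (out h)
    · rw [if_pos hT]; split_ifs <;> norm_num
    · rw [if_neg hT, if_neg fun hh => hT hh.2]
  · refine ENNReal.ofReal_le_ofReal (mul_le_mul_of_nonneg_left ?_ (by positivity))
    have e5 : Real.exp (-5) ≤ 1 / 100 := by
      rw [Real.exp_neg, inv_le_comm₀ (Real.exp_pos _) (by norm_num)]
      have h3 : Real.exp 5 = Real.exp 1 ^ 5 := by rw [← Real.exp_nat_mul]; norm_num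
      have h5 := Real.exp_one_gt_d9
      rw [h3]
      calc (1 / 100 : ℝ)⁻¹ ≤ (27 / 10) ^ 5 := by norm_num
        _ ≤ _ := by gcongr; linarith
    have e6 : Real.exp (29 / 2 * ((k : ℝ) / n) * 331777 ^ t + 5) * (2 * Real.exp (-n / 8))
        ≤ 2 * Real.exp (-5) := by
      rw [mul_left_comm, ← Real.exp_add]
      gcongr
      linarith
    linarith

/-- A deterministic algorithm with few rounds rarely outputs a matrix close to the plant. -/
theorem det_bound {n k t : ℕ} (hn : 200 ≤ n) (hk : n ≤ k)
    (hK : 232 * (331777 : ℝ) ^ t * k ≤ (n : ℝ) ^ 2) (Q : QueryMaps (n * n) k t) (hQ : Q.Valid)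
    (out : (Fin t → Fin k → ℝ) → Matrix (Fin n) (Fin n) ℝ)
    (hout : ∀ i j, Measurable fun h => out h i j) :
    ∑ v, ∑ u, gam (Fin (n * n)) {G |
        Close v u (out (Q.resp (G + snr n • tensor (sgv u) (sgv v))))}
      ≤ ENNReal.ofReal (2 ^ n * 2 ^ n * (1 / 10)) := by
  have hn1 : 0 < n := by omega
  set E : Fin t → (Fin n → Bool) → (Fin n → Bool) → Set (Fin (n * n) → ℝ) := fun j v u => {G |
        (trunc Q j j.isLt.le).resp (G + snr n • tensor (sgv u) (sgv v)) ∈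
          {h : Fin (j : ℕ) → Fin k → ℝ |
            (∀ i, sqNorm (trunc Q j j.isLt.le i (hist h i) *ᵥ tensor (sgv u) (sgv v))
              ≤ 232 * 331777 ^ (i : ℕ) * k) ∧
            232 * 331777 ^ (j : ℕ) * k < sqNorm (Q j h *ᵥ tensor (sgv u) (sgv v))}} with hE
  set L : (Fin n → Bool) → (Fin n → Bool) → Set (Fin (n * n) → ℝ) := fun v u => {G |
        Q.resp (G + snr n • tensor (sgv u) (sgv v)) ∈ {h : Fin t → Fin k → ℝ |
          (∀ i, sqNorm (Q i (hist h i) *ᵥ tensor (sgv u) (sgv v))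
            ≤ 232 * 331777 ^ (i : ℕ) * k) ∧ Close v u (out h)}} with hL
  have hsub : ∀ v u, {G | Close v u (out (Q.resp (G + snr n • tensor (sgv u) (sgv v))))}
      ⊆ (⋃ j, E j v u) ∪ L v u := by
    intro v u G hG
    set a := G + snr n • tensor (sgv u) (sgv v) with ha
    by_cases hall : ∀ i, sqNorm (Q i (hist (Q.resp a) i) *ᵥ tensor (sgv u) (sgv v))
            ≤ 232 * 331777 ^ (i : ℕ) * k
    · exact Or.inr ⟨hall, hG⟩
    · left
      push Not at hall
      -- the first round that violates the energy bound
      have hmin : ∃ m : ℕ, ∃ h : m < t, 232 * 331777 ^ m * k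
          < sqNorm (Q ⟨m, h⟩ (hist (Q.resp a) ⟨m, h⟩) *ᵥ tensor (sgv u) (sgv v)) := by
        obtain ⟨i, hi⟩ := hall
        exact ⟨i.1, i.isLt, hi⟩
      obtain ⟨hm, hlt⟩ := Nat.find_spec hmin
      set m := Nat.find hmin with hmdef
      have hh : (trunc Q m hm.le).resp a = hist (Q.resp a) ⟨m, hm⟩ := by
        funext i
        exact trunc_resp Q m hm.le a i
      refine Set.mem_iUnion.2 ⟨⟨m, hm⟩, ?_, ?_⟩
      · intro i
        have := Nat.find_min hmin i.isLt
        push Not at this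
        have h2 := this (i.isLt.trans hm)
        have h3 : hist ((trunc Q m hm.le).resp a) i
            = hist (Q.resp a) ⟨i.1, i.isLt.trans hm⟩ := by
          rw [hh]; rfl
        show sqNorm (trunc Q m hm.le i (hist ((trunc Q m hm.le).resp a) i)
          *ᵥ tensor (sgv u) (sgv v)) ≤ _
        rw [h3]
        exact h2
      · show _ < sqNorm (Q ⟨m, hm⟩ ((trunc Q m hm.le).resp a) *ᵥ tensor (sgv u) (sgv v))
        rw [hh]
        exact hlt
  calc _ ≤ ∑ v, ∑ u, (∑ j, gam (Fin (n * n)) (E j v u) + gam (Fin (n * n)) (L v u)) := by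
        refine Finset.sum_le_sum fun v _ => Finset.sum_le_sum fun u _ => ?_
        refine (measure_mono (hsub v u)).trans ((measure_union_le _ _).trans ?_)
        gcongr
        exact measure_iUnion_fintype_le _ _
    _ = ∑ j, ∑ v, ∑ u, gam (Fin (n * n)) (E j v u)
          + ∑ v, ∑ u, gam (Fin (n * n)) (L v u) := by
        simp only [Finset.sum_add_distrib]
        congr 1
        rw [Finset.sum_congr rfl fun v _ => Finset.sum_comm, Finset.sum_comm]
    _ ≤ ∑ j : Fin t, ENNReal.ofReal (2 ^ n * 2 ^ n * (1 / 32 * (1 / 2) ^ (j : ℕ)))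
          + ENNReal.ofReal (2 ^ n * 2 ^ n * (3 / 100)) := by
        refine add_le_add (Finset.sum_le_sum fun j _ => ?_) ?_
        · exact escape_bound hn1 hk Q hQ j
        · exact final_bound hn hK Q hQ out hout
    _ ≤ _ := by
        rw [← ENNReal.ofReal_sum_of_nonneg fun j _ => by positivity,
          ← ENNReal.ofReal_add (Finset.sum_nonneg fun j _ => by positivity) (by positivity),
          ← Finset.mul_sum, ← mul_add]
        refine ENNReal.ofReal_le_ofReal (mul_le_mul_of_nonneg_left ?_ (by positivity))
        have := sum_half_le t
        linarith

/-! ### From approximation to recovery of the plant, and randomized algorithms -/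

theorem specNorm_nonneg {n : ℕ} (A : Matrix (Fin n) (Fin n) ℝ) : 0 ≤ specNorm A := by
  refine Real.sSup_nonneg ?_
  rintro _ ⟨x, _, rfl⟩
  exact Real.sqrt_nonneg _

theorem sqNorm_mulVec_le_specNorm {n : ℕ} (A : Matrix (Fin n) (Fin n) ℝ) (x : Fin n → ℝ) :
    sqNorm (A *ᵥ x) ≤ specNorm A ^ 2 * sqNorm x := by
  obtain ⟨x₀, hx₀, htop⟩ := exists_top A
  have hle : Real.sqrt (sqNorm (A *ᵥ x₀)) ≤ specNorm A := by
    refine le_csSup ⟨Real.sqrt (sqNorm (A *ᵥ x₀)), ?_⟩ ⟨x₀, hx₀, rfl⟩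
    rintro _ ⟨y, hy, rfl⟩
    refine Real.sqrt_le_sqrt ((htop y).trans ?_)
    exact mul_le_of_le_one_right (sqNorm_nonneg _) hy
  have h2 : sqNorm (A *ᵥ x₀) ≤ specNorm A ^ 2 := by
    rw [← Real.sq_sqrt (sqNorm_nonneg (A *ᵥ x₀))]
    gcongr
  exact (htop x).trans (mul_le_mul_of_nonneg_right h2 (sqNorm_nonneg x))

theorem specNorm_le {n : ℕ} (A : Matrix (Fin n) (Fin n) ℝ) (R : ℝ) (hR : 0 ≤ R)
    (h : ∀ x, sqNorm (A *ᵥ x) ≤ R ^ 2 * sqNorm x) : specNorm A ≤ R := by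
  refine csSup_le ⟨_, 0, by simp [sqNorm], rfl⟩ ?_
  rintro _ ⟨y, hy, rfl⟩
  refine Real.sqrt_le_iff.2 ⟨hR, (h y).trans ?_⟩
  exact mul_le_of_le_one_right (sq_nonneg R) hy

theorem singVal_le {n : ℕ} (A X : Matrix (Fin n) (Fin n) ℝ) (r : ℕ) (hX : X.rank ≤ r) :
    singVal A (r + 1) ≤ specNorm (A - X) := by
  refine csInf_le ⟨0, ?_⟩ ⟨X, by simpa using hX, rfl⟩
  rintro _ ⟨Y, _, rfl⟩
  exact specNorm_nonneg _

theorem eq_zero_of_specNorm_le {n : ℕ} (A : Matrix (Fin n) (Fin n) ℝ) (h : specNorm A ≤ 0) :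
    A = 0 := by
  have h0 : specNorm A = 0 := le_antisymm h (specNorm_nonneg A)
  ext i j
  have h1 := sqNorm_mulVec_le_specNorm A (Pi.single j 1)
  rw [h0] at h1
  have h2 : sqNorm (A *ᵥ Pi.single j 1) = 0 :=
    le_antisymm (by simpa using h1) (sqNorm_nonneg _)
  have h3 := congrFun (sqNorm_eq_zero h2) i
  simpa using h3

/-- An approximation within the guarantee of an input of rank at most `r` is exact. -/
theorem exact_of_lowRank {n r : ℕ} (A B : Matrix (Fin n) (Fin n) ℝ) (hA : A.rank ≤ r)
    (h : specNorm (A - B) ≤ 2 * singVal A (r + 1)) : B = A := by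
  have h1 := singVal_le A A r hA
  have h2 : specNorm (A - A) ≤ 0 := by
    refine specNorm_le _ 0 le_rfl fun x => ?_
    simp [sqNorm]
  have h3 : A - B = 0 := eq_zero_of_specNorm_le _ (by linarith)
  exact (sub_eq_zero.1 h3).symm

theorem abs_bilin_le {n : ℕ} (A : Matrix (Fin n) (Fin n) ℝ) (R : ℝ) (hR : 0 ≤ R)
    (h : ∀ x, sqNorm (A *ᵥ x) ≤ R ^ 2 * sqNorm x) (u v : Fin n → Bool) :
    |sgv u ⬝ᵥ (A *ᵥ sgv v)| ≤ R * n := by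
  refine abs_le_of_sq_le_sq ?_ (by positivity)
  have h1 := dot_sq_le (sgv u) (A *ᵥ sgv v)
  have h2 := h (sgv v)
  rw [sqNorm_sgv] at h1 h2
  calc (sgv u ⬝ᵥ (A *ᵥ sgv v)) ^ 2 ≤ n * sqNorm (A *ᵥ sgv v) := h1
    _ ≤ n * (R ^ 2 * n) := by gcongr
    _ = (R * n) ^ 2 := by ring

/-- Success of the approximation on the planted matrix forces the output close to the plant. -/
theorem close_of_success {n r : ℕ} (hr : 1 ≤ r) (G : Fin (n * n) → ℝ)
    (hG : ∀ x, sqNorm (mat G *ᵥ x) ≤ 144 * n * sqNorm x) (v u : Fin n → Bool)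
    (B : Matrix (Fin n) (Fin n) ℝ)
    (hB : specNorm (mat (G + snr n • tensor (sgv u) (sgv v)) - B)
      ≤ 2 * singVal (mat (G + snr n • tensor (sgv u) (sgv v))) (r + 1)) :
    Close v u B := by
  have hplant : mat (G + snr n • tensor (sgv u) (sgv v))
      = mat G + vecMulVec (snr n • sgv u) (sgv v) := by
    rw [mat_add, mat_smul, mat_tensor, smul_vecMulVec]
  have hq := Real.sq_sqrt (Nat.cast_nonneg (α := ℝ) n)
  have hG' : ∀ x, sqNorm (mat G *ᵥ x) ≤ (12 * Real.sqrt n) ^ 2 * sqNorm x := by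
    intro x
    rw [mul_pow, hq]
    exact (hG x).trans (le_of_eq (by ring))
  rw [hplant] at hB
  have h1 := singVal_le (mat G + vecMulVec (snr n • sgv u) (sgv v))
    (vecMulVec (snr n • sgv u) (sgv v)) r ((rank_vecMulVec_le _ _).trans hr)
  rw [add_sub_cancel_right] at h1
  have h2 := specNorm_le (mat G) (12 * Real.sqrt n) (by positivity) hG'
  have h3 : specNorm (mat G + vecMulVec (snr n • sgv u) (sgv v) - B) ≤ 24 * Real.sqrt n := by
    linarith
  intro u' v'
  have h4 := abs_bilin_le (mat G + vecMulVec (snr n • sgv u) (sgv v) - B) (24 * Real.sqrt n)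
    (by positivity) (fun x => (sqNorm_mulVec_le_specNorm _ x).trans (by
      have := specNorm_nonneg (mat G + vecMulVec (snr n • sgv u) (sgv v) - B)
      have := sqNorm_nonneg x
      gcongr)) u' v'
  have h5 := abs_bilin_le (mat G) (12 * Real.sqrt n) (by positivity) hG' u' v'
  have h6 : sgv u' ⬝ᵥ (vecMulVec (snr n • sgv u) (sgv v) *ᵥ sgv v')
      = snr n * ((sgv u' ⬝ᵥ sgv u) * (sgv v ⬝ᵥ sgv v')) := by
    rw [vecMulVec_mulVec]
    simp only [dotProduct_smul, MulOpposite.smul_eq_mul_unop, MulOpposite.unop_op, smul_eq_mul]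
    ring
  rw [sub_mulVec, add_mulVec, dotProduct_sub, dotProduct_add, h6] at h4
  rw [abs_le] at *
  constructor <;> linarith [h4.1, h4.2, h5.1, h5.2]

/-- Without any measurement the output cannot be right on two different rank-one inputs. -/
theorem no_zero_rounds {n r k : ℕ} (hn : 0 < n) (hr : 1 ≤ r)
    (Ω : Type) [MeasurableSpace Ω] (μ : Measure Ω) [IsProbabilityMeasure μ]
    (Qf : Ω → QueryMaps (n * n) k 0)
    (out : Ω → (Fin 0 → Fin k → ℝ) → Matrix (Fin n) (Fin n) ℝ)
    (hout : ∀ i j : Fin n, Measurable fun p : Ω × (Fin 0 → Fin k → ℝ) => out p.1 p.2 i j)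
    (hsucc : ∀ A : Matrix (Fin n) (Fin n) ℝ,
            (99 / 100 : ℝ≥0∞) ≤
              μ {ω | (out ω (QueryMaps.resp (Qf ω) (_root_.vec n A))).rank ≤ r ∧
                    specNorm (A - out ω (QueryMaps.resp (Qf ω) (_root_.vec n A)))
                      ≤ 2 * singVal A (r + 1)}) : False := by
  set i₀ : Fin n := ⟨0, hn⟩
  set h₀ : Fin 0 → Fin k → ℝ := fun i => i.elim0
  have hh : ∀ h : Fin 0 → Fin k → ℝ, h = h₀ := fun h => Subsingleton.elim _ _
  have hm : Measurable fun ω => out ω h₀ i₀ i₀ :=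
    (hout i₀ i₀).comp (measurable_id.prodMk measurable_const)
  have key : ∀ A : Matrix (Fin n) (Fin n) ℝ, A.rank ≤ 1 →
      (99 / 100 : ℝ≥0∞) ≤ μ ((fun ω => out ω h₀ i₀ i₀) ⁻¹' {A i₀ i₀}) := by
    intro A hA
    refine (hsucc A).trans (measure_mono fun ω hω => ?_)
    have h2 := exact_of_lowRank _ _ (hA.trans hr) hω.2
    rw [hh (QueryMaps.resp _ _)] at h2
    simp [h2]
  have k0 := key 0 (by simp)
  have k1 := key (vecMulVec (fun _ => 1) (fun _ => 1)) (rank_vecMulVec_le _ _)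
  have hdis : Disjoint ((fun ω => out ω h₀ i₀ i₀) ⁻¹' {(0 : Matrix (Fin n) (Fin n) ℝ) i₀ i₀})
      ((fun ω => out ω h₀ i₀ i₀) ⁻¹'
        {(vecMulVec (fun _ => (1 : ℝ)) (fun _ => 1) : Matrix (Fin n) (Fin n) ℝ) i₀ i₀}) := by
    refine Disjoint.preimage _ ?_
    simp [vecMulVec_apply]
  have hu := measure_union hdis (hm (measurableSet_singleton _)) (μ := μ)
  have hle : (99 / 100 : ℝ≥0∞) + 99 / 100 ≤ 1 := by
    refine (add_le_add k0 k1).trans ?_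
    rw [← hu]
    exact prob_le_one
  have e : (99 / 100 : ℝ≥0∞) = ENNReal.ofReal (99 / 100) := by
    rw [ENNReal.ofReal_div_of_pos (by norm_num)]; simp
  rw [e, ← ENNReal.ofReal_add (by norm_num) (by norm_num), ← ENNReal.ofReal_one,
    ENNReal.ofReal_le_ofReal_iff (by norm_num)] at hle
  norm_num at hle

/-- A randomized algorithm whose `t` rounds cannot amplify the plant fails on some input. -/
theorem no_few_rounds {n r k t : ℕ} (hn : 200 ≤ n) (hr : 1 ≤ r) (hk : n ≤ k)
    (hK : 232 * (331777 : ℝ) ^ t * k ≤ (n : ℝ) ^ 2)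
    (Ω : Type) [MeasurableSpace Ω] (μ : Measure Ω) [IsProbabilityMeasure μ]
    (Qf : Ω → QueryMaps (n * n) k t)
    (out : Ω → (Fin t → Fin k → ℝ) → Matrix (Fin n) (Fin n) ℝ)
    (hval : ∀ ω, (Qf ω).Valid)
    (hQm : ∀ (j : Fin t) (i : Fin k) (l : Fin (n * n)),
            Measurable fun p : Ω × (Fin (j : ℕ) → Fin k → ℝ) => Qf p.1 j p.2 i l)
    (hout : ∀ i j : Fin n, Measurable fun p : Ω × (Fin t → Fin k → ℝ) => out p.1 p.2 i j)
    (hsucc : ∀ A : Matrix (Fin n) (Fin n) ℝ,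
            (99 / 100 : ℝ≥0∞) ≤
              μ {ω | (out ω (QueryMaps.resp (Qf ω) (_root_.vec n A))).rank ≤ r ∧
                    specNorm (A - out ω (QueryMaps.resp (Qf ω) (_root_.vec n A)))
                      ≤ 2 * singVal A (r + 1)}) : False := by
  have hn2 : (200 : ℝ) ≤ n := by exact_mod_cast hn
  obtain ⟨Bad, hBm, hBp, hBad⟩ := bad_event n
  set f : (Fin n → Bool) → (Fin n → Bool) → Ω × (Fin (n * n) → ℝ) → Matrix (Fin n) (Fin n) ℝ :=
    fun v u p => out p.1 ((Qf p.1).resp (p.2 + snr n • tensor (sgv u) (sgv v))) with hf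
  have hfm : ∀ v u i j, Measurable fun p => f v u p i j := by
    intro v u i j
    exact (hout i j).comp (measurable_fst.prodMk ((measurable_resp Qf hQm).comp
      (measurable_fst.prodMk (measurable_snd.add_const _))))
  have hS : ∀ v u, MeasurableSet {p | Close v u (f v u p)} :=
    fun v u => measurableSet_close v u _ (hfm v u)
  have hgood : ENNReal.ofReal (1 / 2) ≤ gam (Fin (n * n)) Badᶜ := by
    rw [prob_compl_eq_one_sub hBm]
    have h1 : gam (Fin (n * n)) Bad ≤ ENNReal.ofReal (1 / 2) := by
      refine hBp.trans (ENNReal.ofReal_le_ofReal ?_)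
      rw [show (-2 * n : ℝ) = -(2 * n) by ring, Real.exp_neg,
        inv_le_comm₀ (Real.exp_pos _) (by norm_num)]
      have := Real.add_one_le_exp (2 * n : ℝ)
      norm_num
      linarith
    have h2 : (1 : ℝ≥0∞) = ENNReal.ofReal (1 / 2) + ENNReal.ofReal (1 / 2) := by
      rw [← ENNReal.ofReal_add (by norm_num) (by norm_num)]; norm_num
    refine ENNReal.le_sub_of_add_le_right (measure_ne_top _ _) ?_
    rw [h2]
    gcongr
  have e : (99 / 100 : ℝ≥0∞) = ENNReal.ofReal (99 / 100) := by
    rw [ENNReal.ofReal_div_of_pos (by norm_num)]; simp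
  have hlow : ∀ v u, ENNReal.ofReal (99 / 200)
      ≤ (μ.prod (gam (Fin (n * n)))) {p | Close v u (f v u p)} := by
    intro v u
    rw [Measure.prod_apply_symm (hS v u)]
    calc ENNReal.ofReal (99 / 200)
        = ENNReal.ofReal (99 / 100) * ENNReal.ofReal (1 / 2) := by
          rw [← ENNReal.ofReal_mul (by norm_num)]; norm_num
      _ ≤ (99 / 100) * gam (Fin (n * n)) Badᶜ := by rw [e]; gcongr
      _ = ∫⁻ _ in Badᶜ, (99 / 100 : ℝ≥0∞) ∂gam (Fin (n * n)) := by rw [setLIntegral_const]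
      _ ≤ ∫⁻ G in Badᶜ, μ ((fun ω => (ω, G)) ⁻¹' {p | Close v u (f v u p)})
            ∂gam (Fin (n * n)) := by
          refine setLIntegral_mono (measurable_measure_prodMk_right (hS v u)) fun G hG => ?_
          refine (hsucc (mat (G + snr n • tensor (sgv u) (sgv v)))).trans
            (measure_mono fun ω hω => ?_)
          rw [vec_mat] at hω
          exact close_of_success hr G (hBad G hG) v u _ hω.2
      _ ≤ _ := setLIntegral_le_lintegral _ _
  have hup : ∑ v, ∑ u, (μ.prod (gam (Fin (n * n)))) {p | Close v u (f v u p)}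
      ≤ ENNReal.ofReal (2 ^ n * 2 ^ n * (1 / 10)) := by
    have hms : ∀ v u, Measurable fun ω =>
        gam (Fin (n * n)) (Prod.mk ω ⁻¹' {p | Close v u (f v u p)}) :=
      fun v u => measurable_measure_prodMk_left (hS v u)
    have h1 : ∑ v, ∑ u, (μ.prod (gam (Fin (n * n)))) {p | Close v u (f v u p)}
        = ∫⁻ ω, ∑ v, ∑ u, gam (Fin (n * n)) (Prod.mk ω ⁻¹' {p | Close v u (f v u p)}) ∂μ := by
      rw [lintegral_finsetSum _ fun v _ => Finset.measurable_sum _ fun u _ => hms v u]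
      refine Finset.sum_congr rfl fun v _ => ?_
      rw [lintegral_finsetSum _ fun u _ => hms v u]
      exact Finset.sum_congr rfl fun u _ => Measure.prod_apply (hS v u)
    rw [h1]
    calc _ ≤ ∫⁻ _, ENNReal.ofReal (2 ^ n * 2 ^ n * (1 / 10)) ∂μ :=
          lintegral_mono fun ω => det_bound hn hk hK (Qf ω) (hval ω) (out ω)
            (fun i j => (hout i j).comp measurable_prodMk_left)
      _ = _ := by simp
  have hcard : ∑ _v : Fin n → Bool, ∑ _u : Fin n → Bool, ENNReal.ofReal (99 / 200)
      = ENNReal.ofReal (2 ^ n * 2 ^ n * (99 / 200)) := by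
    rw [← ENNReal.ofReal_sum_of_nonneg fun _ _ => by norm_num,
      ← ENNReal.ofReal_sum_of_nonneg fun _ _ => Finset.sum_nonneg fun _ _ => by norm_num]
    congr 1
    simp
    ring
  have hfin := (Finset.sum_le_sum fun v _ => Finset.sum_le_sum fun u _ => hlow v u).trans hup
  rw [hcard, ENNReal.ofReal_le_ofReal_iff (by positivity)] at hfin
  have : (0 : ℝ) < 2 ^ n * 2 ^ n := by positivity
  linarith

theorem one_le_log_log {n : ℕ} (hn : 200 ≤ n) : 1 ≤ Real.log (Real.log n) := by
  have hn2 : (200 : ℝ) ≤ n := by exact_mod_cast hn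
  have he := Real.exp_one_lt_d9
  have h1 : Real.exp 1 ≤ Real.log n := by
    rw [Real.le_log_iff_exp_le (by linarith)]
    have h3 : Real.exp 3 = Real.exp 1 ^ 3 := by rw [← Real.exp_nat_mul]; norm_num
    calc Real.exp (Real.exp 1) ≤ Real.exp 3 := Real.exp_le_exp.2 (by linarith)
      _ = Real.exp 1 ^ 3 := h3
      _ ≤ 3 ^ 3 := by gcongr; linarith
      _ ≤ n := by linarith
  rw [Real.le_log_iff_exp_le (by linarith [Real.exp_pos 1])]
  exact h1

/-- Round lower bound for 2-approximate spectral norm low-rank approximation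
with constant success probability. -/
theorem spectral_LRA_round_lower_bound :
    ∃ (c : ℝ) (n₀ : ℕ), 0 < c ∧
      ∀ (n r k t : ℕ), n₀ ≤ n → 1 ≤ r → n * r ≤ k → k ≤ n ^ 2 →
      ∀ (Ω : Type) [MeasurableSpace Ω] (μ : Measure Ω) [IsProbabilityMeasure μ]
        (Qf : Ω → QueryMaps (n * n) k t)
        (out : Ω → (Fin t → Fin k → ℝ) → Matrix (Fin n) (Fin n) ℝ),
        (∀ ω, (Qf ω).Valid) →
        (∀ (j : Fin t) (i : Fin k) (l : Fin (n * n)),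
            Measurable fun p : Ω × (Fin (j : ℕ) → Fin k → ℝ) => Qf p.1 j p.2 i l) →
        (∀ i j : Fin n,
            Measurable fun p : Ω × (Fin t → Fin k → ℝ) => out p.1 p.2 i j) →
        (∀ A : Matrix (Fin n) (Fin n) ℝ,
            (99 / 100 : ℝ≥0∞) ≤
              μ {ω | (out ω (QueryMaps.resp (Qf ω) (vec n A))).rank ≤ r ∧
                    specNorm (A - out ω (QueryMaps.resp (Qf ω) (vec n A)))
                      ≤ 2 * singVal A (r + 1)}) →
        c * (Real.log ((n : ℝ) ^ 2 / k) / Real.log (Real.log n)) ≤ (t : ℝ) := by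
  have hL : 0 < Real.log 232 + Real.log 331777 :=
    add_pos (Real.log_pos (by norm_num)) (Real.log_pos (by norm_num))
  -- For `t ≥ 1` and this `c`, the negated bound gives
  -- `232 * 331777 ^ t ≤ (232 * 331777) ^ t ≤ n ^ 2 / k`.
  refine ⟨1 / (Real.log 232 + Real.log 331777), 200, by positivity, ?_⟩
  intro n r k t hn hr hnr hkn Ω _ μ _ Qf out hval hQm hout hsucc
  have hk : n ≤ k := (Nat.le_mul_of_pos_right n hr).trans hnr
  have hn0 : (0 : ℝ) < n := by exact_mod_cast (by omega : 0 < n)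
  have hk0 : (0 : ℝ) < k := by exact_mod_cast (by omega : 0 < k)
  have hkn' : (k : ℝ) ≤ (n : ℝ) ^ 2 := by exact_mod_cast hkn
  rcases Nat.eq_zero_or_pos t with rfl | ht
  · exact (no_zero_rounds (by omega) hr Ω μ Qf out hout hsucc).elim
  · by_contra hcon
    push Not at hcon
    refine no_few_rounds hn hr hk ?_ Ω μ Qf out hval hQm hout hsucc
    have hlog : 0 ≤ Real.log ((n : ℝ) ^ 2 / k) :=
      Real.log_nonneg (by rwa [le_div_iff₀ hk0, one_mul])
    have h1 : Real.log ((n : ℝ) ^ 2 / k) / Real.log (Real.log n) ≤ Real.log ((n : ℝ) ^ 2 / k) :=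
      div_le_self hlog (one_le_log_log hn)
    have h2 : (t : ℝ) * (Real.log 232 + Real.log 331777) ≤ Real.log ((n : ℝ) ^ 2 / k) := by
      rw [one_div, inv_mul_eq_div, lt_div_iff₀ hL] at hcon
      linarith
    have ht1 : (1 : ℝ) ≤ t := by exact_mod_cast ht
    have h3 : Real.log (232 * 331777 ^ t) ≤ Real.log ((n : ℝ) ^ 2 / k) := by
      rw [Real.log_mul (by norm_num) (by positivity), Real.log_pow]
      have : 0 < Real.log 232 := Real.log_pos (by norm_num)
      nlinarith
    have h4 := (Real.log_le_log_iff (by positivity) (by positivity)).1 h3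
    rwa [le_div_iff₀ hk0] at h4

end
end
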